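/- arXiv:2303.08408 — 3 statements merged into one kernel-verified Lean document; each statement's English description precedes it below -/
import Mathlib

section
/- Let σ ≥ 0 and let ν be a σ-finite Borel measure on ℝ concentrated on (−∞,0) with ∫_{(−∞,0)} min(z², |z|) ν(dz) < ∞ and tail ν̄(x) := ν((−∞,−x]) regularly varying at infinity with index −α for some α ∈ (1,2). Let g : (0,∞) → (0,∞) be regularly varying at infinity with index 1/α with x·ν̄(g(x)) → 1 as x → ∞. Then for every λ ∈ ℝ, lim_{t → ∞} exp{ −σ²λ²t/(2 g(t)²) + t ∫_{(−∞,0)} (e^{iλz/g(t)} − 1 − iλz/g(t)) ν(dz) } = φ_α(λ), where φ_α(λ) := exp{ ∫_{(−∞,0)} (e^{iλz} − 1 − iλz) · α(−z)^{−α−1} dz }. -/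
open Filter MeasureTheory Set
open scoped Topology

/-!
With `w = iλ`, the compensated exponential `e^{wz} - 1 - wz` at `z < 0` is the integral over
`(0, -z]` of `G(s) = -w (e^{-ws} - 1)`, and `‖G(s)‖ = O(min(s, 1))` because `Re w ≥ 0`. By the layer
cake formula the jump part of the exponent is therefore `∫_0^∞ t ν̄(g(t) s) G(s) ds`. Regular
variation gives `t ν̄(g(t) s) → s^{-α}` pointwise, and Potter's bounds dominate the integrand by a
multiple of `(s^{-p} + s^{-q}) min(s, 1)`, where `1 < q < α < p < 2`, as long as `g(t) s` exceeds a
constant `X`; the range `g(t) s ≤ X` and the Gaussian term are both `O(t / g(t)²)`, which tends to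
`0`. The limit `∫_0^∞ s^{-α} G(s) ds` is converted back by the layer cake formula for the stable
Lévy measure, whose tail is `s^{-α}`.
-/

section LayerCake

variable {Ω E : Type*} [MeasurableSpace Ω] [NormedAddCommGroup E]
  {μ : Measure Ω} {f : Ω → ℝ} {G : ℝ → E}

lemma integrable_indicator_Iic_prod (hf : Measurable f) (hG : ∀ x, IntegrableOn G (Ioc 0 x))
    (hfin : HasFiniteIntegral (fun ω => ∫ s in Ioc 0 (f ω), ‖G s‖) μ) :
    Integrable (fun p : Ω × ℝ => (Iic (f p.1)).indicator G p.2)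
      (μ.prod (volume.restrict (Ioi 0))) := by
  have hG_meas : AEStronglyMeasurable G (volume.restrict (Ioi 0)) := by
    rw [← iUnion_Ioc_eq_Ioi_self_iff.2 fun (x : ℝ) _ => exists_nat_ge x,
      aestronglyMeasurable_iUnion_iff]
    exact fun n => (hG n).aestronglyMeasurable
  have h_meas : AEStronglyMeasurable (fun p : Ω × ℝ => (Iic (f p.1)).indicator G p.2)
      (μ.prod (volume.restrict (Ioi 0))) :=
    hG_meas.comp_snd.indicator (measurableSet_le measurable_snd (hf.comp measurable_fst))
  rw [integrable_prod_iff h_meas]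
  refine ⟨.of_forall fun ω => ?_, h_meas.norm.integral_prod_right', ?_⟩
  · refine (integrable_indicator_iff (s := Iic (f ω)) measurableSet_Iic).2 ?_
    rw [IntegrableOn, Measure.restrict_restrict measurableSet_Iic, Iic_inter_Ioi]
    exact hG _
  · simpa only [norm_indicator_eq_indicator_norm, setIntegral_indicator measurableSet_Iic,
      Ioi_inter_Iic] using hfin

variable [NormedSpace ℝ E] [CompleteSpace E]

lemma integral_indicator_Iic_left (hf : Measurable f) (s : ℝ) :
    ∫ ω, (Iic (f ω)).indicator G s ∂μ = μ.real {ω | s ≤ f ω} • G s :=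
  integral_indicator_const (G s) (measurableSet_le measurable_const hf)

variable [SFinite μ]

theorem integrableOn_measureReal_le_smul (hf : Measurable f) (hG : ∀ x, IntegrableOn G (Ioc 0 x))
    (hfin : HasFiniteIntegral (fun ω => ∫ s in Ioc 0 (f ω), ‖G s‖) μ) :
    IntegrableOn (fun s => μ.real {ω | s ≤ f ω} • G s) (Ioi 0) := by
  simp_rw [← integral_indicator_Iic_left hf]
  exact (integrable_indicator_Iic_prod hf hG hfin).integral_prod_right

theorem integral_setIntegral_Ioc_eq_integral_measureReal_le_smul (hf : Measurable f)
    (hG : ∀ x, IntegrableOn G (Ioc 0 x))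
    (hfin : HasFiniteIntegral (fun ω => ∫ s in Ioc 0 (f ω), ‖G s‖) μ) :
    ∫ ω, (∫ s in Ioc 0 (f ω), G s) ∂μ = ∫ s in Ioi 0, μ.real {ω | s ≤ f ω} • G s := by
  simp_rw [← integral_indicator_Iic_left hf]
  rw [← integral_integral_swap (f := fun ω s => (Iic (f ω)).indicator G s)
    (integrable_indicator_Iic_prod hf hG hfin)]
  simp_rw [setIntegral_indicator measurableSet_Iic, Ioi_inter_Iic]

end LayerCake

/-- Regular variation at infinity with index `ρ`. -/
structure RegularlyVarying (f : ℝ → ℝ) (ρ : ℝ) : Prop where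
  eventually_pos : ∀ᶠ x in atTop, 0 < f x
  tendsto_div : ∀ c > 0, Tendsto (fun x => f (c * x) / f x) atTop (𝓝 (c ^ ρ))

lemma le_pow_mul_of_forall_le_mul {f : ℝ → ℝ} {a b X x : ℝ} (ha : 0 ≤ a) (hb : 1 ≤ b) (hX : 0 ≤ X)
    (h : ∀ y ≥ X, f (b * y) ≤ a * f y) (hx : X ≤ x) (n : ℕ) : f (b ^ n * x) ≤ a ^ n * f x := by
  induction n with
  | zero => simp
  | succ n ih =>
    have hXn : X ≤ b ^ n * x := hx.trans (le_mul_of_one_le_left (hX.trans hx) (one_le_pow₀ hb))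
    calc f (b ^ (n + 1) * x) = f (b * (b ^ n * x)) := by ring_nf
      _ ≤ a * f (b ^ n * x) := h _ hXn
      _ ≤ a * (a ^ n * f x) := by gcongr
      _ = a ^ (n + 1) * f x := by ring

namespace RegularlyVarying

variable {f : ℝ → ℝ} {α p q : ℝ}

lemma pos_of_antitoneOn {ρ : ℝ} (hf : RegularlyVarying f ρ) (hanti : AntitoneOn f (Ioi 0)) {x : ℝ}
    (hx : 0 < x) : 0 < f x := by
  obtain ⟨y, hy, hxy⟩ := (hf.eventually_pos.and (eventually_ge_atTop x)).exists
  exact hy.trans_le (hanti hx (hx.trans_le hxy) hxy)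

lemma eventually_le_rpow_mul (hf : RegularlyVarying f (-α)) (hanti : AntitoneOn f (Ioi 0))
    (hq : 0 ≤ q) (hqα : q < α) : ∀ᶠ x in atTop, ∀ r ≥ 1, f (r * x) ≤ (r / 2) ^ (-q) * f x := by
  have h_step := (hf.tendsto_div 2 two_pos).eventually_lt_const
    (Real.rpow_lt_rpow_of_exponent_lt one_lt_two (neg_lt_neg hqα))
  obtain ⟨X, hX⟩ := eventually_atTop.1 (h_step.and hf.eventually_pos)
  filter_upwards [eventually_ge_atTop (max X 1)] with x hx r hr
  have hx_pos : 0 < x := one_pos.trans_le ((le_max_right X 1).trans hx)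
  obtain ⟨n, hn_le, hn_lt⟩ := exists_nat_pow_near hr one_lt_two
  have h_iter := le_pow_mul_of_forall_le_mul (f := f) (by positivity) one_le_two
    (by positivity) (fun y hy => ((div_lt_iff₀ (hX y ((le_max_left X 1).trans hy)).2).1
      (hX y ((le_max_left X 1).trans hy)).1).le) hx n
  calc f (r * x) ≤ f (2 ^ n * x) :=
        hanti (mem_Ioi.2 (by positivity)) (mem_Ioi.2 (by positivity)) (by gcongr)
    _ ≤ (2 ^ (-q)) ^ n * f x := h_iter
    _ = (2 ^ n) ^ (-q) * f x := by rw [Real.rpow_pow_comm two_pos.le]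
    _ ≤ (r / 2) ^ (-q) * f x := by
      have := (hf.pos_of_antitoneOn hanti hx_pos).le
      gcongr ?_ * _
      exact Real.rpow_le_rpow_of_nonpos (by positivity)
        (by rw [div_le_iff₀ two_pos, ← pow_succ]; exact hn_lt.le) (neg_nonpos.2 hq)

lemma eventually_rpow_mul_le (hf : RegularlyVarying f (-α)) (hanti : AntitoneOn f (Ioi 0))
    (hp : 0 ≤ p) (hαp : α < p) : ∀ᶠ x in atTop, ∀ r ≥ 1, (2 * r) ^ (-p) * f x ≤ f (r * x) := by
  have h_step := (hf.tendsto_div 2 two_pos).eventually_const_lt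
    (Real.rpow_lt_rpow_of_exponent_lt one_lt_two (neg_lt_neg hαp))
  obtain ⟨X, hX⟩ := eventually_atTop.1 (h_step.and hf.eventually_pos)
  filter_upwards [eventually_ge_atTop (max X 1)] with x hx r hr
  have hx_pos : 0 < x := one_pos.trans_le ((le_max_right X 1).trans hx)
  obtain ⟨n, hn_le, hn_lt⟩ := exists_nat_pow_near hr one_lt_two
  have h_iter := le_pow_mul_of_forall_le_mul (f := fun y => -f y) (a := 2 ^ (-p)) (by positivity)
    one_le_two (by positivity) (fun y hy => by
      have hXy := hX y ((le_max_left X 1).trans hy)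
      rw [mul_neg, neg_le_neg_iff]
      exact ((lt_div_iff₀ hXy.2).1 hXy.1).le) hx (n + 1)
  rw [mul_neg, neg_le_neg_iff] at h_iter
  calc (2 * r) ^ (-p) * f x ≤ (2 ^ (n + 1)) ^ (-p) * f x := by
        have := (hf.pos_of_antitoneOn hanti hx_pos).le
        gcongr ?_ * _
        exact Real.rpow_le_rpow_of_nonpos (by positivity)
          (by rw [pow_succ']; gcongr) (neg_nonpos.2 hp)
    _ = (2 ^ (-p)) ^ (n + 1) * f x := by rw [Real.rpow_pow_comm two_pos.le]
    _ ≤ f (2 ^ (n + 1) * x) := h_iter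
    _ ≤ f (r * x) :=
        hanti (mem_Ioi.2 (by positivity)) (mem_Ioi.2 (by positivity)) (by gcongr)

theorem exists_potter_bound (hf : RegularlyVarying f (-α)) (hanti : AntitoneOn f (Ioi 0))
    (hq : 0 ≤ q) (hqα : q < α) (hαp : α < p) :
    ∃ C X, 0 < C ∧ 0 < X ∧ ∀ x ≥ X, ∀ s > 0, X ≤ x * s →
      f (x * s) ≤ C * (s ^ (-p) + s ^ (-q)) * f x := by
  have hp : 0 ≤ p := (hq.trans hqα.le).trans hαp.le
  obtain ⟨X₀, hX₀⟩ := eventually_atTop.1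
    ((hf.eventually_le_rpow_mul hanti hq hqα).and (hf.eventually_rpow_mul_le hanti hp hαp))
  refine ⟨2 ^ p + 2 ^ q, max X₀ 1, by positivity, by positivity, fun x hx s hs hxs => ?_⟩
  have hx_pos : 0 < x := one_pos.trans_le ((le_max_right _ _).trans hx)
  have hfx := hf.pos_of_antitoneOn hanti hx_pos
  have hX₀x := (le_max_left _ _).trans hx
  rcases le_total 1 s with h1 | h1
  · calc f (x * s) = f (s * x) := by rw [mul_comm]
      _ ≤ (s / 2) ^ (-q) * f x := (hX₀ x hX₀x).1 s h1
      _ = 2 ^ q * s ^ (-q) * f x := by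
        rw [Real.div_rpow hs.le two_pos.le, Real.rpow_neg two_pos.le, div_inv_eq_mul,
          mul_comm (2 ^ q)]
      _ ≤ _ := by
        gcongr
        · exact le_add_of_nonneg_left (by positivity)
        · exact le_add_of_nonneg_left (by positivity)
  · have h_lower := (hX₀ (x * s) ((le_max_left _ _).trans hxs)).2 s⁻¹ ((one_le_inv₀ hs).2 h1)
    rw [mul_left_comm, inv_mul_cancel₀ hs.ne', mul_one, Real.rpow_neg (by positivity),
      inv_mul_le_iff₀ (by positivity)] at h_lower
    calc f (x * s) ≤ (2 * s⁻¹) ^ p * f x := h_lower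
      _ = 2 ^ p * s ^ (-p) * f x := by
        rw [Real.mul_rpow two_pos.le (by positivity), Real.inv_rpow hs.le, Real.rpow_neg hs.le]
      _ ≤ _ := by
        gcongr
        · exact le_add_of_nonneg_right (by positivity)
        · exact le_add_of_nonneg_right (by positivity)

theorem tendsto_rpow_mul_atTop (hf : RegularlyVarying f (-α)) (hanti : AntitoneOn f (Ioi 0))
    (hα : 0 ≤ α) (hαp : α < p) : Tendsto (fun x => x ^ p * f x) atTop atTop := by
  obtain ⟨p', hαp', hp'p⟩ := exists_between hαp
  obtain ⟨X, hX, hX_pos⟩ := ((hf.eventually_rpow_mul_le hanti (hα.trans hαp'.le) hαp').and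
    (eventually_gt_atTop 0)).exists
  have hfX := hf.pos_of_antitoneOn hanti hX_pos
  have h_lower : Tendsto (fun x => x ^ (p - p') * ((2 / X) ^ (-p') * f X)) atTop atTop :=
    (tendsto_rpow_atTop (sub_pos.2 hp'p)).atTop_mul_const (by positivity)
  refine tendsto_atTop_mono' _ ?_ h_lower
  filter_upwards [eventually_ge_atTop X] with x hx
  have hx_pos := hX_pos.trans_le hx
  calc x ^ (p - p') * ((2 / X) ^ (-p') * f X)
      = x ^ p * ((2 * (x / X)) ^ (-p') * f X) := by
        rw [sub_eq_add_neg, Real.rpow_add hx_pos, ← mul_div_assoc, mul_comm 2 x, mul_div_assoc,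
          Real.mul_rpow hx_pos.le (by positivity)]
        ring
    _ ≤ x ^ p * f (x / X * X) := by
        gcongr
        exact hX (x / X) ((one_le_div hX_pos).2 hx)
    _ = x ^ p * f x := by rw [div_mul_cancel₀ _ hX_pos.ne']

end RegularlyVarying

/-- A norming function `g` for the tail `N` (the paper's asymptotic inverse of `1 / N`): it is
eventually positive and `t * N (g t) → 1`. -/
structure IsNormingFunction (N g : ℝ → ℝ) : Prop where
  eventually_pos : ∀ᶠ t in atTop, 0 < g t
  tendsto_mul : Tendsto (fun t => t * N (g t)) atTop (𝓝 1)

namespace IsNormingFunction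

variable {N g : ℝ → ℝ} {α p q : ℝ}

lemma tendsto_atTop {ρ : ℝ} (hg : IsNormingFunction N g) (hN : RegularlyVarying N ρ)
    (hanti : AntitoneOn N (Ioi 0)) : Tendsto g atTop atTop := by
  have h_zero : Tendsto (fun t => N (g t)) atTop (𝓝 0) := by
    refine (mul_zero (1 : ℝ) ▸ hg.tendsto_mul.mul tendsto_inv_atTop_zero).congr' ?_
    filter_upwards [eventually_ne_atTop 0] with t ht
    rw [mul_right_comm, mul_inv_cancel₀ ht, one_mul]
  refine Filter.tendsto_atTop.2 fun M => ?_
  have hM : 0 < max M 1 := by positivity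
  filter_upwards [h_zero.eventually_lt_const (hN.pos_of_antitoneOn hanti hM), hg.eventually_pos]
    with t h_lt ht
  by_contra! h_gt
  exact h_lt.not_ge (hanti ht hM (h_gt.le.trans (le_max_left M 1)))

lemma tendsto_mul_comp_mul {ρ : ℝ} (hg : IsNormingFunction N g) (hN : RegularlyVarying N ρ)
    (hanti : AntitoneOn N (Ioi 0)) {s : ℝ} (hs : 0 < s) :
    Tendsto (fun t => t * N (g t * s)) atTop (𝓝 (s ^ ρ)) := by
  refine (one_mul (s ^ ρ) ▸
    hg.tendsto_mul.mul ((hN.tendsto_div s hs).comp (hg.tendsto_atTop hN hanti))).congr' ?_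
  filter_upwards [hg.eventually_pos] with t ht
  have := (hN.pos_of_antitoneOn hanti ht).ne'
  simp only [Function.comp_apply, mul_comm s]
  field_simp

lemma tendsto_div_rpow (hg : IsNormingFunction N g) (hN : RegularlyVarying N (-α))
    (hanti : AntitoneOn N (Ioi 0)) (hα : 0 ≤ α) (hαp : α < p) :
    Tendsto (fun t => t / g t ^ p) atTop (𝓝 0) := by
  refine (hg.tendsto_mul.div_atTop
    ((hN.tendsto_rpow_mul_atTop hanti hα hαp).comp (hg.tendsto_atTop hN hanti))).congr' ?_
  filter_upwards [hg.eventually_pos] with t ht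
  have := (hN.pos_of_antitoneOn hanti ht).ne'
  simp only [Function.comp_apply]
  field_simp

lemma exists_eventually_mul_le (hg : IsNormingFunction N g) (hN : RegularlyVarying N (-α))
    (hanti : AntitoneOn N (Ioi 0)) (hq : 0 ≤ q) (hqα : q < α) (hαp : α < p) :
    ∃ C X, 0 < X ∧ ∀ᶠ t in atTop, ∀ s > 0, X ≤ g t * s →
      t * N (g t * s) ≤ C * (s ^ (-p) + s ^ (-q)) := by
  obtain ⟨C, X, hC, hX, h_potter⟩ := hN.exists_potter_bound hanti hq hqα hαp
  refine ⟨C * 2, X, hX, ?_⟩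
  filter_upwards [eventually_ge_atTop 0, (hg.tendsto_atTop hN hanti).eventually_ge_atTop X,
    hg.tendsto_mul.eventually_le_const one_lt_two] with t ht hXg h_le s hs hXs
  calc t * N (g t * s) ≤ t * (C * (s ^ (-p) + s ^ (-q)) * N (g t)) := by
        gcongr
        exact h_potter (g t) hXg s hs hXs
    _ = C * (s ^ (-p) + s ^ (-q)) * (t * N (g t)) := by ring
    _ ≤ C * (s ^ (-p) + s ^ (-q)) * 2 := by gcongr
    _ = C * 2 * (s ^ (-p) + s ^ (-q)) := by ring

end IsNormingFunction

lemma integrableOn_min_one_mul_rpow {a : ℝ} (h1 : 1 < a) (h2 : a < 2) :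
    IntegrableOn (fun s : ℝ => min s 1 * s ^ (-a)) (Ioi 0) := by
  rw [← Ioc_union_Ioi_eq_Ioi zero_le_one]
  refine IntegrableOn.union ?_ ?_
  · have h_pow : IntegrableOn (fun s : ℝ => s ^ (1 - a)) (Ioc 0 1) := by
      rw [integrableOn_Ioc_iff_integrableOn_Ioo, intervalIntegral.integrableOn_Ioo_rpow_iff one_pos]
      linarith
    refine h_pow.congr_fun (fun s hs => ?_) measurableSet_Ioc
    simp only [min_eq_left hs.2, sub_eq_add_neg, Real.rpow_add hs.1, Real.rpow_one]
  · refine (integrableOn_Ioi_rpow_of_lt (neg_lt_neg h1) one_pos).congr_fun (fun s hs => ?_)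
      measurableSet_Ioi
    simp only [min_eq_right (mem_Ioi.1 hs).le, one_mul]

section NormedIntegrals

variable {E : Type*} [NormedAddCommGroup E] [NormedSpace ℝ E] {N g : ℝ → ℝ} {G : ℝ → E} {C : ℝ}

lemma norm_mul_comp_mul_smul_le {M : ℝ → ℝ} {c s t : ℝ} (hc : 0 < c) (hs : 0 < s) (ht : 0 ≤ t)
    (hG : ‖G s‖ ≤ C * s) : ‖(t * M (c * s)) • G s‖ ≤ t / c * C * ‖c * s * M (c * s)‖ := by
  calc ‖(t * M (c * s)) • G s‖ = t * ‖M (c * s)‖ * ‖G s‖ := by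
        rw [norm_smul, norm_mul, Real.norm_of_nonneg ht]
    _ ≤ t * ‖M (c * s)‖ * (C * s) := by gcongr
    _ = t / c * C * ‖c * s * M (c * s)‖ := by
        rw [norm_mul, Real.norm_of_nonneg (mul_pos hc hs).le]
        field_simp

lemma integrableOn_norm_comp_mul {M : ℝ → ℝ} (hM : IntegrableOn (fun s => s * M s) (Ioi 0)) {c : ℝ}
    (hc : 0 < c) : IntegrableOn (fun s => ‖c * s * M (c * s)‖) (Ioi 0) :=
  (integrableOn_Ioi_comp_mul_left_iff (fun s => ‖s * M s‖) 0 hc).2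
    (by rw [mul_zero]; exact hM.norm)

lemma tendsto_integral_mul_smul_zero {M : ℝ → ℝ} (hM : IntegrableOn (fun s => s * M s) (Ioi 0))
    (hg_pos : ∀ᶠ t in atTop, 0 < g t) (hg : Tendsto (fun t => t / g t ^ 2) atTop (𝓝 0))
    (hG : ∀ s > 0, ‖G s‖ ≤ C * s) :
    Tendsto (fun t => ∫ s in Ioi 0, (t * M (g t * s)) • G s) atTop (𝓝 0) := by
  refine squeeze_zero_norm' (a := fun t => t / g t ^ 2 * (C * ∫ s in Ioi 0, ‖s * M s‖)) ?_
    (by simpa using hg.mul_const (C * ∫ s in Ioi 0, ‖s * M s‖))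
  filter_upwards [hg_pos, eventually_ge_atTop 0] with t hgt ht
  calc ‖∫ s in Ioi 0, (t * M (g t * s)) • G s‖
      ≤ ∫ s in Ioi 0, t / g t * C * ‖g t * s * M (g t * s)‖ :=
        norm_integral_le_of_norm_le ((integrableOn_norm_comp_mul hM hgt).const_mul _)
          (ae_restrict_of_forall_mem measurableSet_Ioi fun s hs =>
            norm_mul_comp_mul_smul_le hgt hs ht (hG s hs))
    _ = t / g t * C * ((g t)⁻¹ * ∫ s in Ioi 0, ‖s * M s‖) := by
        rw [integral_const_mul, integral_comp_mul_left_Ioi (fun s => ‖s * M s‖) 0 hgt, mul_zero,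
          smul_eq_mul]
    _ = t / g t ^ 2 * (C * ∫ s in Ioi 0, ‖s * M s‖) := by
        field_simp

lemma integrableOn_mul_indicator_Iic (hN : IntegrableOn (fun s => min s 1 * N s) (Ioi 0)) (X : ℝ) :
    IntegrableOn (fun s => s * (Iic X).indicator N s) (Ioi 0) := by
  have h_Ioc : IntegrableOn (fun s => max s 1 * (min s 1 * N s)) (Ioc 0 X) :=
    (hN.mono_set Ioc_subset_Ioi_self).continuousOn_mul_of_subset (by fun_prop) isCompact_Icc
      measurableSet_Ioc Ioc_subset_Icc_self
  simp_rw [← mul_assoc, max_mul_min, mul_one] at h_Ioc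
  simp_rw [← indicator_mul_right (Iic X) (fun s : ℝ => s)]
  rwa [IntegrableOn, integrable_indicator_iff measurableSet_Iic, IntegrableOn,
    Measure.restrict_restrict measurableSet_Iic, Iic_inter_Ioi]

lemma aestronglyMeasurable_mul_indicator_comp_mul_smul (hanti : AntitoneOn N (Ioi 0))
    (hG : AEStronglyMeasurable G (volume.restrict (Ioi 0))) {S : Set ℝ} (hS : MeasurableSet S)
    {c : ℝ} (hc : 0 < c) (t : ℝ) :
    AEStronglyMeasurable (fun s => (t * S.indicator N (c * s)) • G s)
      (volume.restrict (Ioi 0)) := by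
  have hanti_comp : AntitoneOn (fun s => N (c * s)) (Ioi 0) := fun x hx y hy hxy =>
    hanti (mul_pos hc hx) (mul_pos hc hy) (by gcongr)
  have h_meas := (aemeasurable_restrict_of_antitoneOn (μ := volume) measurableSet_Ioi
    hanti_comp).aestronglyMeasurable
  exact ((h_meas.indicator (hS.preimage (measurable_const_mul c))).const_mul t).smul hG

lemma IsNormingFunction.exists_integrableOn_bound {α : ℝ} (hg : IsNormingFunction N g)
    (hN : RegularlyVarying N (-α)) (hanti : AntitoneOn N (Ioi 0)) (hα1 : 1 < α) (hα2 : α < 2)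
    (hG : ∀ s > 0, ‖G s‖ ≤ C * min s 1) :
    ∃ (X : ℝ) (B : ℝ → ℝ), IntegrableOn B (Ioi 0) ∧ ∀ᶠ t in atTop, ∀ s > 0,
      ‖(t * (Ioi X).indicator N (g t * s)) • G s‖ ≤ B s := by
  obtain ⟨q, hq1, hqα⟩ := exists_between hα1
  obtain ⟨p, hαp, hp2⟩ := exists_between hα2
  obtain ⟨K, X, hX, h_le⟩ := hg.exists_eventually_mul_le hN hanti (by linarith) hqα hαp
  have hB : IntegrableOn
      (fun s : ℝ => |K| * |C| * (min s 1 * s ^ (-p) + min s 1 * s ^ (-q))) (Ioi 0) :=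
    ((integrableOn_min_one_mul_rpow (hα1.trans hαp) hp2).add
      (integrableOn_min_one_mul_rpow hq1 (hqα.trans hα2))).const_mul _
  refine ⟨X, _, hB, ?_⟩
  filter_upwards [h_le, eventually_ge_atTop 0] with t h_le_t ht s hs
  by_cases hXs : X < g t * s
  · have hN_nonneg := (hN.pos_of_antitoneOn hanti (hX.trans hXs)).le
    rw [indicator_of_mem (mem_Ioi.2 hXs), norm_smul, Real.norm_of_nonneg (by positivity)]
    calc t * N (g t * s) * ‖G s‖
        ≤ |K| * (s ^ (-p) + s ^ (-q)) * (|C| * min s 1) := by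
          refine mul_le_mul ((h_le_t s hs hXs.le).trans ?_) ((hG s hs).trans ?_) (norm_nonneg _)
            (by positivity)
          · gcongr
            exact le_abs_self K
          · gcongr
            exact le_abs_self C
      _ = |K| * |C| * (min s 1 * s ^ (-p) + min s 1 * s ^ (-q)) := by ring
  · rw [indicator_of_notMem (by simpa using hXs), mul_zero, zero_smul, norm_zero]
    positivity

lemma IsNormingFunction.tendsto_integral_mul_indicator_Ioi_smul {ρ X : ℝ} {B : ℝ → ℝ}
    (hg : IsNormingFunction N g) (hN : RegularlyVarying N ρ) (hanti : AntitoneOn N (Ioi 0))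
    (hG_meas : AEStronglyMeasurable G (volume.restrict (Ioi 0))) (hB_int : IntegrableOn B (Ioi 0))
    (hB : ∀ᶠ t in atTop, ∀ s > 0, ‖(t * (Ioi X).indicator N (g t * s)) • G s‖ ≤ B s) :
    Tendsto (fun t => ∫ s in Ioi 0, (t * (Ioi X).indicator N (g t * s)) • G s) atTop
      (𝓝 (∫ s in Ioi 0, s ^ ρ • G s)) := by
  refine tendsto_integral_filter_of_dominated_convergence B
    (hg.eventually_pos.mono fun t ht =>
      aestronglyMeasurable_mul_indicator_comp_mul_smul hanti hG_meas measurableSet_Ioi ht t)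
    (hB.mono fun t ht => ae_restrict_of_forall_mem measurableSet_Ioi ht) hB_int
    (ae_restrict_of_forall_mem measurableSet_Ioi fun s hs => ?_)
  refine ((hg.tendsto_mul_comp_mul hN hanti hs).smul_const (G s)).congr' ?_
  filter_upwards [((hg.tendsto_atTop hN hanti).atTop_mul_const hs).eventually_gt_atTop X] with t ht
  rw [indicator_of_mem (mem_Ioi.2 ht)]

/- Near the origin `t * N (g t * s)` has no integrable majorant uniform in `t`, so the jumps of
original size at most `X` are treated separately: they contribute `O(t / g t ^ 2)`, while Potter's
bound dominates the rest. -/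
theorem IsNormingFunction.tendsto_integral_mul_smul {α : ℝ} (hg : IsNormingFunction N g)
    (hN : RegularlyVarying N (-α)) (hanti : AntitoneOn N (Ioi 0)) (hα1 : 1 < α) (hα2 : α < 2)
    (hN_int : IntegrableOn (fun s => min s 1 * N s) (Ioi 0))
    (hG_meas : AEStronglyMeasurable G (volume.restrict (Ioi 0)))
    (hG : ∀ s > 0, ‖G s‖ ≤ C * min s 1) :
    Tendsto (fun t => ∫ s in Ioi 0, (t * N (g t * s)) • G s) atTop
      (𝓝 (∫ s in Ioi 0, s ^ (-α) • G s)) := by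
  obtain ⟨X, B, hB_int, hB⟩ := hg.exists_integrableOn_bound hN hanti hα1 hα2 hG
  have h_large := hg.tendsto_integral_mul_indicator_Ioi_smul hN hanti hG_meas hB_int hB
  have hC : 0 ≤ C := by simpa using (norm_nonneg _).trans (hG 1 one_pos)
  have hG_lin : ∀ s > 0, ‖G s‖ ≤ C * s := fun s hs =>
    (hG s hs).trans (by gcongr; exact min_le_left s 1)
  have hM_int := integrableOn_mul_indicator_Iic hN_int X
  have htg : Tendsto (fun t => t / g t ^ 2) atTop (𝓝 0) := by
    simpa using hg.tendsto_div_rpow hN hanti (by linarith) hα2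
  rw [← zero_add (∫ s in Ioi 0, s ^ (-α) • G s)]
  have h_small := tendsto_integral_mul_smul_zero hM_int hg.eventually_pos htg hG_lin
  refine (h_small.add h_large).congr' ?_
  filter_upwards [hB, hg.eventually_pos, eventually_ge_atTop 0] with t hBt hgt ht
  have h_meas {S : Set ℝ} (hS : MeasurableSet S) :=
    aestronglyMeasurable_mul_indicator_comp_mul_smul hanti hG_meas hS hgt t
  rw [← integral_add
    (((integrableOn_norm_comp_mul hM_int hgt).const_mul _).mono' (h_meas measurableSet_Iic)
      (ae_restrict_of_forall_mem measurableSet_Ioi fun s hs =>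
        norm_mul_comp_mul_smul_le hgt hs ht (hG_lin s hs)))
    (hB_int.mono' (h_meas measurableSet_Ioi) (ae_restrict_of_forall_mem measurableSet_Ioi hBt))]
  simp_rw [← add_smul, ← mul_add, ← compl_Iic, indicator_self_add_compl_apply]

end NormedIntegrals

/-- The tail function `x ↦ ν((-∞, -x])`, written `ν̄` in the paper. -/
noncomputable def lowerTail (ν : Measure ℝ) (x : ℝ) : ℝ :=
  ν.real (Iic (-x))

section LowerTail

variable {E : Type*} [NormedAddCommGroup E] {ν : Measure ℝ} {G : ℝ → E} {C c : ℝ}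

lemma antitoneOn_lowerTail (hν : Integrable (fun z => min (z ^ 2) |z|) ν) :
    AntitoneOn (lowerTail ν) (Ioi 0) := fun x hx y _ hxy => by
  have hx_min : 0 < min (x ^ 2) x := lt_min (pow_pos hx 2) hx
  refine measureReal_mono (Iic_subset_Iic.2 (neg_le_neg hxy)) (ne_top_of_le_ne_top
    (hν.measure_ge_lt_top hx_min).ne (measure_mono fun z hz => ?_))
  have hxz : |x| ≤ |z| := by
    rw [abs_of_pos hx]
    exact (le_neg.1 hz).trans (neg_le_abs z)
  exact min_le_min (sq_le_sq.2 hxz) ((le_abs_self x).trans hxz)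

lemma integrableOn_Ioc_of_norm_le_min (hG_meas : AEStronglyMeasurable G (volume.restrict (Ioi 0)))
    (hG : ∀ s > 0, ‖G s‖ ≤ C * min s 1) (x : ℝ) : IntegrableOn G (Ioc 0 x) :=
  Integrable.mono' (g := fun s => C * min s 1) (Continuous.integrableOn_Ioc (by fun_prop))
    (hG_meas.mono_set Ioc_subset_Ioi_self)
    (ae_restrict_of_forall_mem measurableSet_Ioc fun s hs => hG s hs.1)

lemma setIntegral_Ioc_norm_le (hG : ∀ s > 0, ‖G s‖ ≤ C * min s 1) (x : ℝ) :
    ∫ s in Ioc 0 x, ‖G s‖ ≤ C * min (x ^ 2) |x| := by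
  have hC : 0 ≤ C := by simpa using (norm_nonneg _).trans (hG 1 one_pos)
  rcases le_or_gt x 0 with hx | hx
  · rw [Ioc_eq_empty hx.not_gt, setIntegral_empty]
    positivity
  have h_const (K : ℝ) (hK : ∀ s ∈ Ioc 0 x, ‖G s‖ ≤ K) : ∫ s in Ioc 0 x, ‖G s‖ ≤ K * x := by
    have := norm_setIntegral_le_of_norm_le_const (μ := volume) (s := Ioc 0 x) (C := K)
      (f := fun s => ‖G s‖) (by simp) (by simpa using hK)
    simpa [hx.le] using (le_abs_self _).trans this
  rw [abs_of_pos hx, mul_min_of_nonneg _ _ hC]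
  refine le_min ?_ (h_const C fun s hs => ?_)
  · rw [sq, ← mul_assoc]
    refine h_const (C * x) fun s hs => (hG s hs.1).trans ?_
    gcongr
    exact (min_le_left s 1).trans hs.2
  · exact (hG s hs.1).trans (mul_le_of_le_one_right hC (min_le_right s 1))

lemma hasFiniteIntegral_setIntegral_Ioc_norm (hν : Integrable (fun z => min (z ^ 2) |z|) ν)
    (hG : ∀ s > 0, ‖G s‖ ≤ C * min s 1) (hc : 0 < c) :
    HasFiniteIntegral (fun z => ∫ s in Ioc 0 (-z / c), ‖G s‖) ν := by
  have hC : 0 ≤ C := by simpa using (norm_nonneg _).trans (hG 1 one_pos)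
  refine ((hν.const_mul (C * max (c⁻¹ ^ 2) c⁻¹)).hasFiniteIntegral).mono' (.of_forall fun z => ?_)
  rw [Real.norm_of_nonneg (by positivity), mul_assoc]
  refine (setIntegral_Ioc_norm_le hG _).trans (mul_le_mul_of_nonneg_left ?_ hC)
  rw [mul_min_of_nonneg _ _ (by positivity), div_eq_mul_inv, abs_mul, abs_neg, mul_pow, neg_sq,
    abs_of_pos (inv_pos.2 hc), mul_comm (z ^ 2), mul_comm |z|]
  exact min_le_min (by gcongr; exact le_max_left _ _) (by gcongr; exact le_max_right _ _)

lemma measureReal_le_neg_div (hc : 0 < c) (s : ℝ) :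
    ν.real {z | s ≤ -z / c} = lowerTail ν (c * s) := by
  congr with z
  change s ≤ -z / c ↔ z ≤ -(c * s)
  rw [le_div_iff₀ hc, le_neg, mul_comm]

variable [NormedSpace ℝ E] [CompleteSpace E] [SFinite ν]

theorem integrableOn_lowerTail_smul (hν : Integrable (fun z => min (z ^ 2) |z|) ν)
    (hG_meas : AEStronglyMeasurable G (volume.restrict (Ioi 0)))
    (hG : ∀ s > 0, ‖G s‖ ≤ C * min s 1) :
    IntegrableOn (fun s => lowerTail ν s • G s) (Ioi 0) := by
  simpa only [measureReal_le_neg_div one_pos, one_mul] using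
    integrableOn_measureReal_le_smul (μ := ν) (f := fun z => -z / 1) (by fun_prop)
      (integrableOn_Ioc_of_norm_le_min hG_meas hG)
      (hasFiniteIntegral_setIntegral_Ioc_norm hν hG one_pos)

theorem setIntegral_Iio_setIntegral_Ioc (hν : Integrable (fun z => min (z ^ 2) |z|) ν)
    (hG_meas : AEStronglyMeasurable G (volume.restrict (Ioi 0)))
    (hG : ∀ s > 0, ‖G s‖ ≤ C * min s 1) (hc : 0 < c) :
    ∫ z in Iio 0, (∫ s in Ioc 0 (-z / c), G s) ∂ν =
      ∫ s in Ioi 0, lowerTail ν (c * s) • G s := by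
  rw [setIntegral_eq_integral_of_forall_compl_eq_zero fun z hz => by
    rw [Ioc_eq_empty (not_lt.2 (div_nonpos_of_nonpos_of_nonneg
      (neg_nonpos.2 (notMem_Iio.1 hz)) hc.le)), setIntegral_empty]]
  simp_rw [← measureReal_le_neg_div (ν := ν) hc]
  exact integral_setIntegral_Ioc_eq_integral_measureReal_le_smul (by fun_prop)
    (integrableOn_Ioc_of_norm_le_min hG_meas hG) (hasFiniteIntegral_setIntegral_Ioc_norm hν hG hc)

end LowerTail

/-- The Lévy measure `α (-z) ^ (-α - 1) dz` on `(-∞, 0)` of the spectrally negative `α`-stable law,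
normalised to have the tail `x ^ (-α)`. -/
noncomputable def stableLevyMeasure (α : ℝ) : Measure ℝ :=
  (volume.restrict (Iio 0)).withDensity fun z => ENNReal.ofReal (α * (-z) ^ (-α - 1))

section StableLevyMeasure

variable {α : ℝ}

instance : SFinite (stableLevyMeasure α) := by
  unfold stableLevyMeasure
  infer_instance

lemma stable_density_nonneg (hα : 0 ≤ α) {z : ℝ} (hz : z < 0) : 0 ≤ α * (-z) ^ (-α - 1) :=
  mul_nonneg hα (Real.rpow_nonneg (neg_nonneg.2 hz.le) _)

lemma setIntegral_Iio_stableLevyMeasure {E : Type*} [NormedAddCommGroup E] [NormedSpace ℝ E]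
    (hα : 0 ≤ α) (Φ : ℝ → E) :
    ∫ z in Iio 0, Φ z ∂stableLevyMeasure α = ∫ z in Iio 0, (α * (-z) ^ (-α - 1)) • Φ z := by
  rw [stableLevyMeasure, setIntegral_withDensity_eq_setIntegral_toReal_smul (by fun_prop)
    (by simp) _ measurableSet_Iio, Measure.restrict_restrict measurableSet_Iio, inter_self]
  refine setIntegral_congr_fun measurableSet_Iio fun z hz => ?_
  simp only [ENNReal.toReal_ofReal (stable_density_nonneg hα hz)]

lemma lowerTail_stableLevyMeasure (hα : 0 < α) {x : ℝ} (hx : 0 < x) :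
    lowerTail (stableLevyMeasure α) x = x ^ (-α) := by
  calc lowerTail (stableLevyMeasure α) x
      = ∫ z in Iic (-x), (ENNReal.ofReal (α * (-z) ^ (-α - 1))).toReal := by
        rw [lowerTail, measureReal_def, stableLevyMeasure, withDensity_apply _ measurableSet_Iic,
          Measure.restrict_restrict measurableSet_Iic,
          inter_eq_left.2 (Iic_subset_Iio.2 (neg_lt_zero.2 hx)),
          integral_toReal (by fun_prop) (by simp)]
    _ = ∫ z in Iic (-x), (fun y => α * y ^ (-α - 1)) (-z) :=
        setIntegral_congr_fun measurableSet_Iic fun z hz => ENNReal.toReal_ofReal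
          (stable_density_nonneg hα.le (lt_of_le_of_lt hz (neg_lt_zero.2 hx)))
    _ = ∫ y in Ioi x, α * y ^ (-α - 1) := by
        rw [integral_comp_neg_Iic (-x) fun y : ℝ => α * y ^ (-α - 1), neg_neg]
    _ = x ^ (-α) := by
        rw [integral_const_mul, integral_Ioi_rpow_of_lt (by linarith) hx, sub_add_cancel]
        field_simp

lemma integrable_min_stableLevyMeasure (hα1 : 1 < α) (hα2 : α < 2) :
    Integrable (fun z => min (z ^ 2) |z|) (stableLevyMeasure α) := by
  rw [stableLevyMeasure, integrable_withDensity_iff_integrable_smul' (by fun_prop) (by simp)]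
  have h_int : IntegrableOn (fun s => α * (min s 1 * s ^ (-α))) (Ioi (-0)) := by
    rw [neg_zero]
    exact (integrableOn_min_one_mul_rpow hα1 hα2).const_mul α
  refine h_int.comp_neg_Iio.congr_fun (fun z hz => ?_) measurableSet_Iio
  have hz_pos : 0 < -z := neg_pos.2 hz
  have h_min : min (z ^ 2) |z| = -z * min (-z) 1 := by
    rw [mul_min_of_nonneg _ _ hz_pos.le, abs_of_neg hz, mul_one, neg_mul_neg, sq]
  have h_rpow : (-z) ^ (-α) = -z * (-z) ^ (-α - 1) := by
    rw [Real.rpow_sub_one hz_pos.ne', mul_div_cancel₀ _ hz_pos.ne']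
  simp only [ENNReal.toReal_ofReal (stable_density_nonneg (one_pos.trans hα1).le hz), h_min,
    h_rpow, smul_eq_mul]
  ring

end StableLevyMeasure

lemma norm_exp_sub_one_le_of_re_nonpos {u : ℂ} (hu : u.re ≤ 0) : ‖Complex.exp u - 1‖ ≤ ‖u‖ := by
  have := (convex_halfSpace_re_le 0).norm_image_sub_le_of_norm_hasDerivWithin_le (C := 1)
    (fun v _ => (Complex.hasDerivAt_exp v).hasDerivWithinAt)
    (fun v hv => by rw [Complex.norm_exp]; exact Real.exp_le_one_iff.2 hv)
    (show (0 : ℂ) ∈ {v : ℂ | v.re ≤ 0} by simp) hu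
  simpa using this

lemma norm_mul_exp_sub_one_le {w : ℂ} (hw : w.re ≤ 0) {s : ℝ} (hs : 0 < s) :
    ‖w * (Complex.exp (w * s) - 1)‖ ≤ max (‖w‖ ^ 2) (2 * ‖w‖) * min s 1 := by
  have hws : (w * s).re ≤ 0 := by
    rw [Complex.re_mul_ofReal]
    exact mul_nonpos_of_nonpos_of_nonneg hw hs.le
  have h_lin : ‖Complex.exp (w * s) - 1‖ ≤ ‖w‖ * s := by
    simpa [abs_of_pos hs] using norm_exp_sub_one_le_of_re_nonpos hws
  have h_two : ‖Complex.exp (w * s) - 1‖ ≤ 2 := by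
    refine (norm_sub_le _ _).trans ?_
    rw [Complex.norm_exp, norm_one]
    linarith [Real.exp_le_one_iff.2 hws]
  rw [norm_mul, mul_min_of_nonneg _ _ (by positivity)]
  refine le_min ?_ ?_
  · calc ‖w‖ * ‖Complex.exp (w * s) - 1‖ ≤ ‖w‖ * (‖w‖ * s) := by gcongr
      _ = ‖w‖ ^ 2 * s := by ring
      _ ≤ _ := by gcongr; exact le_max_left _ _
  · calc ‖w‖ * ‖Complex.exp (w * s) - 1‖ ≤ ‖w‖ * 2 := by gcongr
      _ = 2 * ‖w‖ * 1 := by ring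
      _ ≤ _ := by gcongr; exact le_max_right _ _

lemma setIntegral_Ioc_mul_exp_sub_one (w : ℂ) {x : ℝ} (hx : 0 ≤ x) :
    ∫ s in Ioc 0 x, w * (Complex.exp (w * s) - 1) = Complex.exp (w * x) - 1 - w * x := by
  have h_deriv (s : ℝ) : HasDerivAt (fun s : ℝ => Complex.exp (w * s) - w * s)
      (w * (Complex.exp (w * s) - 1)) s := by
    have h_mul : HasDerivAt (fun s : ℝ => w * s) w s := by
      simpa using (Complex.ofRealCLM.hasDerivAt (x := s)).const_mul w
    exact (h_mul.cexp.sub h_mul).congr_deriv (by ring)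
  rw [← intervalIntegral.integral_of_le hx, intervalIntegral.integral_eq_sub_of_hasDerivAt
    (fun s _ => h_deriv s) (Continuous.intervalIntegrable (by fun_prop) _ _)]
  simp only [Complex.ofReal_zero, mul_zero, Complex.exp_zero, sub_zero]
  ring

section StableLimit

variable {ν : Measure ℝ} [SFinite ν] {g : ℝ → ℝ} {α : ℝ}

theorem IsNormingFunction.tendsto_smul_setIntegral_Iio {E : Type*} [NormedAddCommGroup E]
    [NormedSpace ℝ E] [CompleteSpace E] {G : ℝ → E} {C : ℝ}
    (hg : IsNormingFunction (lowerTail ν) g) (hRV : RegularlyVarying (lowerTail ν) (-α))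
    (hν : Integrable (fun z => min (z ^ 2) |z|) ν) (hα1 : 1 < α) (hα2 : α < 2)
    (hG_meas : AEStronglyMeasurable G (volume.restrict (Ioi 0)))
    (hG : ∀ s > 0, ‖G s‖ ≤ C * min s 1) :
    Tendsto (fun t => t • ∫ z in Iio 0, (∫ s in Ioc 0 (-z / g t), G s) ∂ν) atTop
      (𝓝 (∫ z in Iio 0, (α * (-z) ^ (-α - 1)) • ∫ s in Ioc 0 (-z), G s)) := by
  have hα : 0 < α := one_pos.trans hα1
  have h_tail_int : IntegrableOn (fun s => min s 1 * lowerTail ν s) (Ioi 0) := by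
    simp_rw [mul_comm _ (lowerTail ν _)]
    refine integrableOn_lowerTail_smul (C := 1) hν (by fun_prop) fun s hs => ?_
    rw [one_mul, Real.norm_of_nonneg (le_min hs.le zero_le_one)]
  have h_limit : ∫ s in Ioi 0, s ^ (-α) • G s =
      ∫ z in Iio 0, (α * (-z) ^ (-α - 1)) • ∫ s in Ioc 0 (-z), G s := by
    have h_cake := setIntegral_Iio_setIntegral_Ioc (integrable_min_stableLevyMeasure hα1 hα2)
      hG_meas hG one_pos
    simp only [div_one, one_mul] at h_cake
    rw [← setIntegral_Iio_stableLevyMeasure hα.le, h_cake]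
    refine setIntegral_congr_fun measurableSet_Ioi fun s hs => ?_
    simp only [lowerTail_stableLevyMeasure hα hs]
  rw [← h_limit]
  refine (hg.tendsto_integral_mul_smul hRV (antitoneOn_lowerTail hν) hα1 hα2 h_tail_int hG_meas
    hG).congr' ?_
  filter_upwards [hg.eventually_pos] with t ht
  simp_rw [setIntegral_Iio_setIntegral_Ioc hν hG_meas hG ht, mul_smul, integral_smul]

theorem IsNormingFunction.tendsto_mul_setIntegral_exp_sub_one_sub {w : ℂ}
    (hg : IsNormingFunction (lowerTail ν) g) (hRV : RegularlyVarying (lowerTail ν) (-α))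
    (hν : Integrable (fun z => min (z ^ 2) |z|) ν) (hα1 : 1 < α) (hα2 : α < 2) (hw : 0 ≤ w.re) :
    Tendsto (fun t : ℝ => (t : ℂ) * ∫ z in Iio (0 : ℝ),
        (Complex.exp (w * z / (g t : ℂ)) - 1 - w * z / (g t : ℂ)) ∂ν) atTop
      (𝓝 (∫ z in Iio (0 : ℝ),
        (Complex.exp (w * z) - 1 - w * z) * ((α * (-z) ^ (-α - 1) : ℝ) : ℂ))) := by
  have h_kernel (z c : ℝ) (hz : z < 0) (hc : 0 < c) :
      ∫ s in Ioc 0 (-z / c), -w * (Complex.exp (-w * s) - 1) =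
        Complex.exp (w * z / c) - 1 - w * z / c := by
    rw [setIntegral_Ioc_mul_exp_sub_one (-w) (div_nonneg (neg_nonneg.2 hz.le) hc.le)]
    push_cast
    ring_nf
  have h_limit : ∫ z in Iio (0 : ℝ), (α * (-z) ^ (-α - 1)) •
        ∫ s in Ioc 0 (-z), -w * (Complex.exp (-w * s) - 1) =
      ∫ z in Iio (0 : ℝ),
        (Complex.exp (w * z) - 1 - w * z) * ((α * (-z) ^ (-α - 1) : ℝ) : ℂ) := by
    refine setIntegral_congr_fun measurableSet_Iio fun z hz => ?_
    have h_one := h_kernel z 1 hz one_pos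
    rw [div_one, Complex.ofReal_one, div_one] at h_one
    simp only [h_one, Complex.real_smul, mul_comm (_ - _)]
  rw [← h_limit]
  refine (hg.tendsto_smul_setIntegral_Iio hRV hν hα1 hα2
    (Continuous.aestronglyMeasurable (by fun_prop)) fun s hs =>
      norm_mul_exp_sub_one_le (by simpa using hw) hs).congr' ?_
  filter_upwards [hg.eventually_pos] with t ht
  rw [Complex.real_smul, setIntegral_congr_fun measurableSet_Iio fun z hz => h_kernel z (g t) hz ht]

/- At `lam = -I * θ` with `θ ≥ 0` this is the convergence of Laplace transforms. -/
theorem char_function_stable_limit_general (hα1 : 1 < α) (hα2 : α < 2) (σ : ℝ)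
    (hν : Integrable (fun z => min (z ^ 2) |z|) ν) (hRV : RegularlyVarying (lowerTail ν) (-α))
    (hg : IsNormingFunction (lowerTail ν) g) {lam : ℂ} (hlam : lam.im ≤ 0) :
    Tendsto (fun t : ℝ =>
        Complex.exp (-(σ ^ 2 * lam ^ 2 * t) / (2 * g t ^ 2) +
          (t : ℂ) * ∫ z in Iio (0 : ℝ),
            (Complex.exp (Complex.I * lam * z / (g t : ℂ)) - 1 -
              Complex.I * lam * z / (g t : ℂ)) ∂ν))
      atTop
      (𝓝 (Complex.exp (∫ z in Iio (0 : ℝ),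
        (Complex.exp (Complex.I * lam * z) - 1 - Complex.I * lam * z) *
          ((α * (-z) ^ (-α - 1) : ℝ) : ℂ)))) := by
  have h_gauss : Tendsto (fun t : ℝ => -(σ ^ 2 * lam ^ 2 * t) / (2 * g t ^ 2)) atTop
      (𝓝 (0 : ℂ)) := by
    have h_ratio : Tendsto (fun t => ((t / g t ^ (2 : ℝ) : ℝ) : ℂ)) atTop (𝓝 ((0 : ℝ) : ℂ)) :=
      (Complex.continuous_ofReal.tendsto 0).comp
        (hg.tendsto_div_rpow hRV (antitoneOn_lowerTail hν) (one_pos.trans hα1).le hα2)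
    refine (mul_zero (-(σ ^ 2 * lam ^ 2) / 2 : ℂ) ▸ h_ratio.const_mul _).congr fun t => ?_
    rw [Real.rpow_two]
    push_cast
    ring
  have h_jump := hg.tendsto_mul_setIntegral_exp_sub_one_sub (w := Complex.I * lam) hRV hν hα1 hα2
    (by simpa using hlam)
  simpa only [zero_add] using (h_gauss.add h_jump).cexp

end StableLimit

/-- Lemma 4.3 of the paper: convergence of the characteristic function of the rescaled
spectrally negative Lévy process `X_t / g(t)` to the `α`-stable characteristic
function `φ_α`. -/
theorem char_function_stable_limit (α : ℝ) (hα1 : 1 < α) (hα2 : α < 2)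
    (σ : ℝ) (hσ : 0 ≤ σ)
    (ν : Measure ℝ) [SigmaFinite ν]
    (hconc : ν (Ici (0 : ℝ)) = 0)
    (hmin : ∫⁻ z, ENNReal.ofReal (min (z ^ 2) |z|) ∂ν ≠ ⊤)
    (htail : ∀ᶠ x in atTop, 0 < ν (Iic (-x)) ∧ ν (Iic (-x)) < ⊤)
    (hRV : ∀ c : ℝ, 0 < c →
      Tendsto (fun x => (ν (Iic (-(c * x)))).toReal / (ν (Iic (-x))).toReal)
        atTop (nhds (c ^ (-α))))
    (g : ℝ → ℝ) (hgpos : ∀ x > 0, 0 < g x)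
    (hgRV : ∀ c : ℝ, 0 < c →
      Tendsto (fun x => g (c * x) / g x) atTop (nhds (c ^ (1 / α))))
    (hg : Tendsto (fun x => x * (ν (Iic (-g x))).toReal) atTop (nhds 1))
    (lam : ℝ) :
    Tendsto (fun t : ℝ =>
        Complex.exp (((-(σ ^ 2 * lam ^ 2 * t) / (2 * g t ^ 2) : ℝ) : ℂ) +
          (t : ℂ) * ∫ z in Iio (0 : ℝ),
            (Complex.exp (Complex.I * lam * z / (g t : ℂ)) - 1 -
              Complex.I * lam * z / (g t : ℂ)) ∂ν))
      atTop
      (nhds (Complex.exp (∫ z in Iio (0 : ℝ),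
        (Complex.exp (Complex.I * lam * z) - 1 - Complex.I * lam * z) *
          ((α * (-z) ^ (-α - 1) : ℝ) : ℂ)))) := by
  have hν : Integrable (fun z => min (z ^ 2) |z|) ν :=
    ⟨Continuous.aestronglyMeasurable (by fun_prop), (hasFiniteIntegral_iff_ofReal
      (.of_forall fun z => le_min (sq_nonneg z) (abs_nonneg z))).2 hmin.lt_top⟩
  have h_tail : RegularlyVarying (lowerTail ν) (-α) :=
    ⟨htail.mono fun x hx => ENNReal.toReal_pos hx.1.ne' hx.2.ne, hRV⟩
  have h_norming : IsNormingFunction (lowerTail ν) g := ⟨(eventually_gt_atTop 0).mono hgpos, hg⟩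
  simpa using char_function_stable_limit_general hα1 hα2 σ hν h_tail h_norming
    (lam := lam) (Complex.ofReal_im lam).le
end

section
/- Let 1 < α < 2 and set c_α := (Γ(2−α)/(1−α)) · cos(πα/2), where Γ is the Gamma function. Then c_α > 0, and for every λ ∈ ℝ, ∫_{(−∞,0)} (e^{iλz} − 1 − iλz) · α(−z)^{−α−1} dz = −c_α |λ|^α (1 + i · sgn(λ) · tan(πα/2)). -/
open MeasureTheory Set

/-!
Let `R n` be the exponential series with its first `n` terms removed, so `(R (n + 1))' = R n`.
For `0 < s.re` and `-n < a.re < 1 - n`, the Mellin transform of `x ↦ R n (-s x)` at `a` is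
`Γ(a) s ^ (-a)`: when `n = 0` this is Euler's integral for real `s`, and both sides are
holomorphic in `s`; integration by parts matches `Γ(a + 1) = a Γ(a)` and raises `n` by one.
For `1 ≤ n` the domination `‖R n (-z)‖ ≤ min (‖z‖ ^ n / n!) (2 ‖z‖ ^ (n - 1) / (n - 1)!)`
on `0 ≤ z.re` makes both sides continuous up to the imaginary axis. The stable exponent is the
case `n = 2`, `s = i λ`, `a = -α`.
-/

section

open Asymptotics Complex Filter Topology
open scoped Nat

/-- The remainder of the exponential series after its first `n` terms. -/
noncomputable def expRemainder (n : ℕ) (z : ℂ) : ℂ :=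
  exp z - ∑ k ∈ Finset.range n, z ^ k / k !

@[simp]
lemma expRemainder_zero (z : ℂ) : expRemainder 0 z = exp z := by
  simp [expRemainder]

lemma expRemainder_two (z : ℂ) : expRemainder 2 z = exp z - 1 - z := by
  simp [expRemainder, Finset.sum_range_succ, sub_sub]

lemma expRemainder_succ (n : ℕ) (z : ℂ) :
    expRemainder (n + 1) z = expRemainder n z - z ^ n / n ! := by
  rw [expRemainder, expRemainder, Finset.sum_range_succ, sub_sub]

@[simp]
lemma expRemainder_succ_apply_zero (n : ℕ) : expRemainder (n + 1) 0 = 0 := by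
  simp [expRemainder, Finset.sum_range_succ']

lemma hasDerivAt_expRemainder_succ (n : ℕ) (z : ℂ) :
    HasDerivAt (expRemainder (n + 1)) (expRemainder n z) z := by
  induction n with
  | zero =>
    rw [expRemainder_zero, funext (expRemainder_succ 0)]
    simpa using hasDerivAt_exp z
  | succ n ih =>
    rw [funext (expRemainder_succ (n + 1)), expRemainder_succ n z]
    refine ih.sub (((hasDerivAt_pow (n + 1) z).div_const _).congr_deriv ?_)
    push_cast [Nat.factorial_succ, Nat.add_sub_cancel]
    field_simp

@[fun_prop]
lemma continuous_expRemainder (n : ℕ) : Continuous (expRemainder n) := by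
  unfold expRemainder
  fun_prop

lemma hasDerivAt_expRemainder_succ_neg_mul (n : ℕ) (s : ℂ) (x : ℝ) :
    HasDerivAt (fun x : ℝ ↦ expRemainder (n + 1) (-(s * x)))
      (-s * expRemainder n (-(s * x))) x := by
  have hlin : HasDerivAt (fun x : ℝ ↦ -(s * x)) (-s) x := by
    simpa using (ofRealCLM.hasDerivAt.const_mul s).fun_neg
  exact ((hasDerivAt_expRemainder_succ n _).comp x hlin).congr_deriv (mul_comm _ _)

lemma norm_expRemainder_neg_le (n : ℕ) {z : ℂ} (hz : 0 ≤ z.re) :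
    ‖expRemainder n (-z)‖ ≤ ‖z‖ ^ n / n ! := by
  induction n generalizing z with
  | zero => simpa [norm_exp] using hz
  | succ n ih =>
    have hderiv := hasDerivAt_expRemainder_succ_neg_mul n z
    have hbound (t : ℝ) : HasDerivAt (fun t : ℝ ↦ (‖z‖ * t) ^ (n + 1) / (n + 1)!)
        (‖z‖ * ((‖z‖ * t) ^ n / n !)) t := by
      refine ((((hasDerivAt_id t).const_mul ‖z‖).pow (n + 1)).div_const _).congr_deriv ?_
      push_cast [Nat.factorial_succ, Nat.add_sub_cancel]
      simp only [id]
      field_simp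
    have hsegment := image_norm_le_of_norm_deriv_right_le_deriv_boundary (a := 0) (b := 1)
      (fun t _ ↦ (hderiv t).continuousAt.continuousWithinAt)
      (fun t _ ↦ (hderiv t).hasDerivWithinAt) (by simp) hbound (fun t ht ↦ ?_)
      (right_mem_Icc.2 zero_le_one)
    · simpa using hsegment
    · have hre : 0 ≤ (z * t).re := by simpa using mul_nonneg hz ht.1
      simpa [abs_of_nonneg ht.1] using mul_le_mul_of_nonneg_left (ih hre) (norm_nonneg z)

lemma norm_expRemainder_succ_neg_le (n : ℕ) {z : ℂ} (hz : 0 ≤ z.re) :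
    ‖expRemainder (n + 1) (-z)‖ ≤ 2 * (‖z‖ ^ n / n !) := by
  calc ‖expRemainder (n + 1) (-z)‖ ≤ ‖expRemainder n (-z)‖ + ‖(-z) ^ n / (n ! : ℂ)‖ := by
        rw [expRemainder_succ]
        exact norm_sub_le _ _
    _ ≤ 2 * (‖z‖ ^ n / n !) := by
        rw [norm_div, norm_pow, norm_neg, norm_natCast, two_mul]
        gcongr
        exact norm_expRemainder_neg_le n hz

variable {a s : ℂ}

lemma expRemainder_isBigO_nhdsGT_zero (n : ℕ) (hs : 0 ≤ s.re) :
    (fun x : ℝ ↦ expRemainder n (-(s * x))) =O[𝓝[>] 0] (· ^ (n : ℝ)) := by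
  refine .of_bound (‖s‖ ^ n / n !) ?_
  filter_upwards [self_mem_nhdsWithin] with x (hx : 0 < x)
  refine (norm_expRemainder_neg_le n (by simpa using mul_nonneg hs hx.le)).trans_eq ?_
  rw [Real.rpow_natCast, norm_mul, norm_pow, norm_real, mul_pow, mul_div_right_comm]

lemma expRemainder_succ_isBigO_atTop (n : ℕ) (hs : 0 ≤ s.re) :
    (fun x : ℝ ↦ expRemainder (n + 1) (-(s * x))) =O[atTop] (· ^ (n : ℝ)) := by
  refine .of_bound (2 * (‖s‖ ^ n / n !)) ?_
  filter_upwards [eventually_ge_atTop 0] with x hx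
  refine (norm_expRemainder_succ_neg_le n (by simpa using mul_nonneg hs hx)).trans_eq ?_
  rw [Real.rpow_natCast, norm_mul, norm_pow, norm_real, mul_pow, mul_div_right_comm, mul_assoc]

lemma mellinConvergent_expRemainder_succ {n : ℕ} (hs : 0 ≤ s.re) (ha : -(n + 1) < a.re)
    (ha' : a.re < -n) : MellinConvergent (fun x : ℝ ↦ expRemainder (n + 1) (-(s * x))) a := by
  refine mellinConvergent_of_isBigO_rpow (a := -n) (b := -(n + 1))
    ((Continuous.locallyIntegrable (by fun_prop)).locallyIntegrableOn _) ?_ ha' ?_ ha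
  · simpa using expRemainder_succ_isBigO_atTop n hs
  · simpa using expRemainder_isBigO_nhdsGT_zero (n + 1) hs

lemma mellinConvergent_exp_neg_mul (hs : 0 < s.re) (ha : 0 < a.re) :
    MellinConvergent (fun x : ℝ ↦ exp (-(s * x))) a := by
  refine mellinConvergent_of_isBigO_rpow_exp (b := 0) hs
    ((Continuous.locallyIntegrable (by fun_prop)).locallyIntegrableOn _) ?_ ?_ ha
  · exact .of_bound 1 (.of_forall fun x ↦ by simp [norm_exp])
  · simpa using expRemainder_isBigO_nhdsGT_zero 0 hs.le

lemma differentiableOn_mellin_exp_neg_mul (ha : 0 < a.re) :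
    DifferentiableOn ℂ (fun s ↦ mellin (fun x : ℝ ↦ exp (-(s * x))) a) {s | 0 < s.re} := by
  intro s (hs : 0 < s.re)
  let r := s.re / 2
  have hr : 0 < r := half_pos hs
  have hnhds : {w : ℂ | r < w.re} ∈ 𝓝 s :=
    (isOpen_lt continuous_const continuous_re).mem_nhds (half_lt_self hs)
  have hbound : IntegrableOn (fun x : ℝ ↦ x ^ a.re * Real.exp (-r * x)) (Ioi 0) := by
    simpa using integrableOn_rpow_mul_exp_neg_mul_rpow (p := 1) (by linarith) one_pos hr
  refine (hasDerivAt_integral_of_dominated_loc_of_deriv_le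
    (F := fun w (x : ℝ) ↦ (x : ℂ) ^ (a - 1) • exp (-(w * x)))
    (F' := fun w (x : ℝ) ↦ (x : ℂ) ^ (a - 1) • (exp (-(w * x)) * -x)) hnhds
    (.of_forall fun w ↦ Measurable.aestronglyMeasurable (by fun_prop))
    (mellinConvergent_exp_neg_mul hs ha) (Measurable.aestronglyMeasurable (by fun_prop)) ?_ hbound
    ?_).2.differentiableAt.differentiableWithinAt
  · filter_upwards [ae_restrict_mem measurableSet_Ioi] with x (hx : 0 < x) w (hw : r < w.re)
    have hpow : x ^ a.re = x ^ (a.re - 1) * x := by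
      rw [← Real.rpow_add_one hx.ne', sub_add_cancel]
    calc ‖(x : ℂ) ^ (a - 1) • (exp (-(w * x)) * -x)‖
        = x ^ a.re * Real.exp (-w.re * x) := by
          rw [norm_smul, norm_mul, norm_neg, norm_exp, neg_re, re_mul_ofReal, ← neg_mul,
            Complex.norm_of_nonneg hx.le, norm_cpow_eq_rpow_re_of_pos hx, sub_re, one_re, hpow]
          ring
      _ ≤ x ^ a.re * Real.exp (-r * x) := by gcongr
  · refine .of_forall fun x w _ ↦ ?_
    simpa using
      ((hasDerivAt_id w).mul_const (x : ℂ)).fun_neg.cexp.fun_const_smul ((x : ℂ) ^ (a - 1))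

lemma eqOn_re_pos_of_forall_ofReal {E : Type*} [NormedAddCommGroup E] [NormedSpace ℂ E]
    [CompleteSpace E] {f g : ℂ → E} (hf : DifferentiableOn ℂ f {s | 0 < s.re})
    (hg : DifferentiableOn ℂ g {s | 0 < s.re}) (hfg : ∀ r : ℝ, 0 < r → f r = g r) :
    EqOn f g {s | 0 < s.re} := by
  have hopen : IsOpen {s : ℂ | 0 < s.re} := isOpen_lt continuous_const continuous_re
  refine (hf.analyticOnNhd hopen).eqOn_of_preconnected_of_frequently_eq (𝕜 := ℂ)
    (hg.analyticOnNhd hopen) (convex_halfSpace_re_gt 0).isPreconnected (z₀ := ((1 : ℝ) : ℂ))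
    (by simp) ?_
  have hofReal : Tendsto ((↑) : ℝ → ℂ) (𝓝[≠] 1) (𝓝[≠] (1 : ℝ)) :=
    continuous_ofReal.continuousAt.continuousWithinAt.tendsto_nhdsWithin fun r hr ↦ by
      simpa using hr
  refine hofReal.frequently (Eventually.frequently ?_)
  filter_upwards [nhdsWithin_le_nhds (lt_mem_nhds one_pos)] with r hr using hfg r hr

lemma mellin_exp_neg_mul (hs : 0 < s.re) (ha : 0 < a.re) :
    mellin (fun x : ℝ ↦ exp (-(s * x))) a = Gamma a * s ^ (-a) := by
  refine eqOn_re_pos_of_forall_ofReal (differentiableOn_mellin_exp_neg_mul ha)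
    (g := fun s ↦ Gamma a * s ^ (-a)) (fun w hw ↦ ?_) (fun r hr ↦ ?_) hs
  · exact ((differentiableAt_id.cpow_const (Or.inl hw)).const_mul _).differentiableWithinAt
  · simp only [mellin, smul_eq_mul]
    rw [integral_cpow_mul_exp_neg_mul_Ioi ha hr, one_div, inv_cpow_ofReal_nonneg hr.le, cpow_neg,
      mul_comm]

lemma isBigO_cpow_mul {l : Filter ℝ} (hl : ∀ᶠ x in l, 0 < x) {f : ℝ → ℂ} {b : ℝ} (a : ℂ)
    (hf : f =O[l] (· ^ (-b))) : (fun x : ℝ ↦ (x : ℂ) ^ a * f x) =O[l] (· ^ (a.re - b)) := by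
  have hcpow : (fun x : ℝ ↦ (x : ℂ) ^ a) =O[l] (· ^ a.re) := by
    refine .of_norm_eventuallyLE ?_
    filter_upwards [hl] with x hx using (norm_cpow_eq_rpow_re_of_pos hx a).le
  refine (hcpow.mul hf).congr' .rfl ?_
  filter_upwards [hl] with x hx
  rw [← Real.rpow_add hx, sub_eq_add_neg]

lemma mellin_deriv_add_one {f f' : ℝ → ℂ} {b c : ℝ} (hf : ∀ x ∈ Ioi 0, HasDerivAt f (f' x) x)
    (hf' : MellinConvergent f' (a + 1)) (hf_top : f =O[atTop] (· ^ (-b))) (ha_top : a.re < b)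
    (hf_bot : f =O[𝓝[>] 0] (· ^ (-c))) (ha_bot : c < a.re) :
    mellin f' (a + 1) = -a * mellin f a := by
  have hcpow (x : ℝ) (hx : x ∈ Ioi 0) :
      HasDerivAt (fun x : ℝ ↦ (x : ℂ) ^ a) (a * (x : ℂ) ^ (a - 1)) x := by
    simpa using ((hasDerivAt_id (x : ℂ)).cpow_const (Or.inl hx)).comp_ofReal
  have hcont : ContinuousOn f (Ioi 0) := fun x hx ↦ (hf x hx).continuousAt.continuousWithinAt
  have hconv : MellinConvergent f a := mellinConvergent_of_isBigO_rpow
    (hcont.locallyIntegrableOn measurableSet_Ioi) hf_top ha_top hf_bot ha_bot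
  have hzero : Tendsto (fun x : ℝ ↦ (x : ℂ) ^ a * f x) (𝓝[>] 0) (𝓝 0) := by
    refine (isBigO_cpow_mul self_mem_nhdsWithin a hf_bot).trans_tendsto ?_
    have := (Real.continuousAt_rpow_const 0 (a.re - c) (Or.inr (by linarith))).tendsto
    rw [Real.zero_rpow (by linarith)] at this
    exact this.mono_left nhdsWithin_le_nhds
  have htop : Tendsto (fun x : ℝ ↦ (x : ℂ) ^ a * f x) atTop (𝓝 0) := by
    refine (isBigO_cpow_mul (eventually_gt_atTop 0) a hf_top).trans_tendsto ?_
    simpa using tendsto_rpow_neg_atTop (sub_pos.2 ha_top)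
  have hparts := integral_Ioi_mul_deriv_eq_deriv_mul hcpow hf
    (by simpa [MellinConvergent, Pi.mul_def] using hf')
    (by simpa [MellinConvergent, Pi.mul_def, mul_assoc, mul_left_comm] using hconv.const_smul a)
    hzero htop
  simpa [mellin, mul_assoc, integral_const_mul] using hparts

lemma mul_mellin_expRemainder_succ {n : ℕ} (hs : 0 ≤ s.re) (ha : -(n + 1) < a.re) (ha' : a.re < -n)
    (hconv : MellinConvergent (fun x : ℝ ↦ expRemainder n (-(s * x))) (a + 1)) :
    a * mellin (fun x : ℝ ↦ expRemainder (n + 1) (-(s * x))) a =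
      s * mellin (fun x : ℝ ↦ expRemainder n (-(s * x))) (a + 1) := by
  have hparts := mellin_deriv_add_one (b := -n) (c := -(n + 1))
    (fun x _ ↦ hasDerivAt_expRemainder_succ_neg_mul n s x) (hconv.const_smul (-s))
    (by simpa using expRemainder_succ_isBigO_atTop n hs) ha'
    (by simpa using expRemainder_isBigO_nhdsGT_zero (n + 1) hs) ha
  have hsmul := mellin_const_smul (fun x : ℝ ↦ expRemainder n (-(s * x))) (a + 1) (-s)
  simp only [smul_eq_mul] at hsmul hparts
  linear_combination hparts - hsmul

lemma mellinConvergent_expRemainder {n : ℕ} (hs : 0 < s.re) (ha : -n < a.re)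
    (ha' : a.re < 1 - n) : MellinConvergent (fun x : ℝ ↦ expRemainder n (-(s * x))) a := by
  cases n with
  | zero => simpa using mellinConvergent_exp_neg_mul hs (by simpa using ha)
  | succ n =>
    exact mellinConvergent_expRemainder_succ hs.le (by simpa using ha)
      (by push_cast at ha'; linarith)

lemma mellin_expRemainder {n : ℕ} (hs : 0 < s.re) (ha : -n < a.re) (ha' : a.re < 1 - n) :
    mellin (fun x : ℝ ↦ expRemainder n (-(s * x))) a = Gamma a * s ^ (-a) := by
  induction n generalizing a with
  | zero => simpa using mellin_exp_neg_mul hs (by simpa using ha)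
  | succ n ih =>
    push_cast at ha ha'
    have hs0 : s ≠ 0 := ne_zero_of_re_pos hs
    have ha0 : a ≠ 0 := by
      rintro rfl
      rw [zero_re] at ha'
      linarith [n.cast_nonneg (α := ℝ)]
    have ha1 : -n < (a + 1).re := by rw [add_re, one_re]; linarith
    have ha1' : (a + 1).re < 1 - n := by rw [add_re, one_re]; linarith
    refine mul_left_cancel₀ ha0 ?_
    rw [mul_mellin_expRemainder_succ hs.le (by linarith) (by linarith)
      (mellinConvergent_expRemainder hs ha1 ha1'), ih ha1 ha1', Gamma_add_one a ha0,
      show -(a + 1) = -a - 1 by ring, cpow_sub _ _ hs0, cpow_one]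
    field_simp

lemma integrableOn_rpow_mul_min_pow {n : ℕ} {p : ℝ} (hp : -(n + 1) < p) (hp' : p < -n)
    {C : ℝ} (hC : 0 ≤ C) :
    IntegrableOn (fun x : ℝ ↦ x ^ (p - 1) *
      min ((C * x) ^ (n + 1) / (n + 1)!) (2 * ((C * x) ^ n / n !))) (Ioi 0) := by
  refine mellin_convergent_of_isBigO_scalar (a := -n) (b := -(n + 1))
    ((Continuous.locallyIntegrable (by fun_prop)).locallyIntegrableOn _) ?_ hp' ?_ hp
  · refine .of_bound (2 * (C ^ n / n !)) ?_
    filter_upwards [eventually_ge_atTop 0] with x hx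
    rw [Real.norm_of_nonneg (by positivity), Real.norm_of_nonneg (by positivity)]
    refine (min_le_right _ _).trans_eq ?_
    rw [neg_neg, Real.rpow_natCast, mul_pow]
    ring
  · refine .of_bound (C ^ (n + 1) / (n + 1)!) ?_
    filter_upwards [self_mem_nhdsWithin] with x (hx : 0 < x)
    rw [Real.norm_of_nonneg (by positivity), Real.norm_of_nonneg (by positivity)]
    refine (min_le_left _ _).trans_eq ?_
    rw [neg_neg, mul_pow, ← Nat.cast_add_one, Real.rpow_natCast]
    ring

lemma continuousOn_mellin_expRemainder_succ {n : ℕ} (ha : -(n + 1) < a.re) (ha' : a.re < -n) :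
    ContinuousOn (fun s ↦ mellin (fun x : ℝ ↦ expRemainder (n + 1) (-(s * x))) a)
      {s | 0 ≤ s.re} := by
  intro s _
  have hnorm : ∀ᶠ w in 𝓝[{s | 0 ≤ s.re}] s, ‖w‖ < ‖s‖ + 1 :=
    nhdsWithin_le_nhds (continuous_norm.continuousAt.eventually_lt_const (lt_add_one _))
  refine continuousWithinAt_of_dominated
    (.of_forall fun w ↦ Measurable.aestronglyMeasurable (by fun_prop)) ?_
    (integrableOn_rpow_mul_min_pow ha ha' (by positivity : 0 ≤ ‖s‖ + 1)) ?_
  · filter_upwards [hnorm, self_mem_nhdsWithin] with w hw (hw_re : 0 ≤ w.re)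
    filter_upwards [ae_restrict_mem measurableSet_Ioi] with x (hx : 0 < x)
    have hre : 0 ≤ (w * x).re := by simpa using mul_nonneg hw_re hx.le
    have hwx : ‖w * x‖ ≤ (‖s‖ + 1) * x := by
      rw [norm_mul, Complex.norm_of_nonneg hx.le]
      gcongr
    rw [norm_smul, norm_cpow_eq_rpow_re_of_pos hx, sub_re, one_re]
    gcongr
    refine le_min ((norm_expRemainder_neg_le _ hre).trans ?_)
      ((norm_expRemainder_succ_neg_le _ hre).trans ?_) <;> gcongr
  · refine .of_forall fun x ↦ Continuous.continuousWithinAt ?_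
    fun_prop

lemma mellin_expRemainder_succ_of_re_nonneg {n : ℕ} (hs : 0 ≤ s.re) (ha : -(n + 1) < a.re)
    (ha' : a.re < -n) :
    mellin (fun x : ℝ ↦ expRemainder (n + 1) (-(s * x))) a = Gamma a * s ^ (-a) := by
  rcases eq_or_ne s 0 with rfl | hs0
  · have ha0 : a ≠ 0 := by
      rintro rfl
      rw [zero_re] at ha'
      linarith [n.cast_nonneg (α := ℝ)]
    simp [mellin, ha0]
  have hEqOn : EqOn (fun s ↦ mellin (fun x : ℝ ↦ expRemainder (n + 1) (-(s * x))) a)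
      (fun s ↦ Gamma a * s ^ (-a)) {s | 0 < s.re} := fun w hw ↦
    mellin_expRemainder hw (by simpa using ha) (by simpa using ha')
  refine hEqOn.of_subset_closure (t := {s : ℂ | 0 ≤ s.re} \ {0})
    ((continuousOn_mellin_expRemainder_succ ha ha').mono sdiff_subset) ?_ ?_ ?_
    (x := s) ⟨hs, hs0⟩
  · refine fun w ⟨(hw : 0 ≤ w.re), hw0⟩ ↦ ContinuousAt.continuousWithinAt ?_
    have hslit : w ∈ slitPlane := by
      rcases hw.lt_or_eq with hpos | hzero
      · exact Or.inl hpos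
      · exact Or.inr fun him ↦ hw0 (Complex.ext hzero.symm him)
    exact continuousAt_const.mul (continuousAt_id.cpow continuousAt_const hslit)
  · exact fun w (hw : 0 < w.re) ↦ ⟨hw.le, by rintro rfl; simp at hw⟩
  · rw [closure_setOfPred_lt_re]
    exact sdiff_subset

lemma integral_Iio_mul_neg_rpow (f : ℝ → ℂ) (c p : ℝ) :
    ∫ z in Iio (0 : ℝ), f z * ((c * (-z) ^ (p - 1) : ℝ) : ℂ) =
      c * mellin (fun x ↦ f (-x)) p := by
  rw [← integral_Iic_eq_integral_Iio, ← neg_zero, ← integral_comp_neg_Ioi, mellin,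
    ← integral_const_mul]
  refine setIntegral_congr_fun measurableSet_Ioi fun x (hx : 0 < x) ↦ ?_
  rw [neg_neg, ofReal_mul, ofReal_cpow hx.le, smul_eq_mul]
  push_cast
  ring

lemma mul_Gamma_neg {p : ℝ} (h0 : p ≠ 0) (h1 : p ≠ 1) :
    p * Real.Gamma (-p) = -(Real.Gamma (2 - p) / (1 - p)) := by
  have hp : 1 - p ≠ 0 := sub_ne_zero.2 h1.symm
  rw [show 2 - p = 1 - p + 1 by ring, Real.Gamma_add_one hp, show 1 - p = -p + 1 by ring,
    Real.Gamma_add_one (neg_ne_zero.2 h0)]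
  rw [← neg_add_eq_sub] at hp
  field_simp

lemma I_mul_ofReal_cpow {p : ℝ} (hp : p ≠ 0) (t : ℝ) :
    (I * t) ^ (p : ℂ) =
      (|t| ^ p : ℝ) * (Real.cos (Real.pi * p / 2) + I * t.sign * Real.sin (Real.pi * p / 2)) := by
  have hangle : Real.pi / 2 * p = Real.pi * p / 2 := by ring
  rcases lt_trichotomy t 0 with ht | rfl | ht
  · have harg : arg (I * t) = -(Real.pi / 2) := by
      rw [show I * t = (-t : ℝ) * -I by simp [mul_comm], arg_real_mul _ (neg_pos.2 ht), arg_neg_I]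
    rw [cpow_ofReal, harg, neg_mul, hangle, Real.cos_neg, Real.sin_neg, Real.sign_of_neg ht,
      norm_mul, norm_I, one_mul, norm_real, Real.norm_eq_abs]
    push_cast
    ring
  · simp [hp]
  · have harg : arg (I * t) = Real.pi / 2 := by rw [arg_mul_real ht, arg_I]
    rw [cpow_ofReal, harg, hangle, Real.sign_of_pos ht, norm_mul, norm_I, one_mul, norm_real,
      Real.norm_eq_abs]
    push_cast
    ring

end

/-- Equation (4.5) of the paper: the limiting characteristic exponent of the
`α`-stable law, `1 < α < 2`. -/
theorem stable_char_exponent_formula (α : ℝ) (hα1 : 1 < α) (hα2 : α < 2) :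
    0 < Real.Gamma (2 - α) / (1 - α) * Real.cos (Real.pi * α / 2) ∧
    ∀ lam : ℝ,
      (∫ z in Iio (0 : ℝ),
          (Complex.exp (Complex.I * lam * z) - 1 - Complex.I * lam * z) *
            ((α * (-z) ^ (-α - 1) : ℝ) : ℂ)) =
        -((Real.Gamma (2 - α) / (1 - α) * Real.cos (Real.pi * α / 2) : ℝ) : ℂ) *
          ((|lam| ^ α : ℝ) : ℂ) *
          (1 + Complex.I * Real.sign lam * Real.tan (Real.pi * α / 2)) := by
  have hcos : Real.cos (Real.pi * α / 2) < 0 := by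
    apply Real.cos_neg_of_pi_div_two_lt_of_lt <;> nlinarith [Real.pi_pos]
  refine ⟨mul_pos_of_neg_of_neg (div_neg_of_pos_of_neg (Real.Gamma_pos_of_pos (by linarith))
    (by linarith)) hcos, fun lam ↦ ?_⟩
  have hΓ : (α : ℂ) * Complex.Gamma (-α : ℝ) = -(Real.Gamma (2 - α) / (1 - α) : ℝ) := by
    rw [Complex.Gamma_ofReal]
    exact_mod_cast mul_Gamma_neg (by linarith) hα1.ne'
  have htan : (Real.sin (Real.pi * α / 2) : ℂ) =
      Real.tan (Real.pi * α / 2) * Real.cos (Real.pi * α / 2) := by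
    exact_mod_cast (Real.tan_mul_cos hcos.ne).symm
  calc
    _ = α * mellin (fun x : ℝ ↦ expRemainder 2 (-(Complex.I * lam * x))) (-α : ℝ) := by
      rw [integral_Iio_mul_neg_rpow]
      simp [expRemainder_two]
    _ = α * (Complex.Gamma (-α : ℝ) * (Complex.I * lam) ^ (α : ℂ)) := by
      rw [mellin_expRemainder_succ_of_re_nonneg (by simp) (by norm_num [hα2]) (by norm_num [hα1])]
      simp
    _ = _ := by
      rw [I_mul_ofReal_cpow (by linarith), ← mul_assoc, hΓ, htan]
      push_cast
      ring
end

section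
/- Let σ ≥ 0 and let ν be a σ-finite Borel measure on ℝ concentrated on (−∞,0) with ∫_{(−∞,0)} min(z², |z|) ν(dz) < ∞ and ∫_{(−∞,−1)} z² ν(dz) < ∞. Assume either σ > 0, or liminf_{x ↓ 0} x^{s−2} ∫_{(−x,0)} z² ν(dz) > 0 for some s ∈ (0,2); in the former case fix any s ∈ (0,2). Then there exists κ > 0 such that for all λ ∈ ℝ with |λ| > 1 and all t > 1, −σ²λ²/2 + t ∫_{(−∞,0)} (cos(λz/√t) − 1) ν(dz) ≤ −κ |λ|^s. -/
open Filter MeasureTheory Set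

/-!
Everything rests on `1 - cos x ≥ (2 / π²) x²` for `|x| ≤ π`. As `1 - cos` is nonnegative, discarding
the jumps `|z| ≥ 1 / |λ|` leaves `t ∫ (cos (λ z / √t) - 1) ν(dz) ≤ -(2 / π²) λ² U(1 / |λ|)` for
`t ≥ 1`, where `U(x) = ∫_{|z| < x} z² ν(dz)`: the factor `t` cancels the square of `1 / √t`.
A lower bound `U(x) ≥ c x^(2 - s)` near `0` extends, with another constant, to `x ∈ (0, 1]` because
`U` is monotone, and at `x = 1 / |λ|` it turns `λ² U(1 / |λ|)` into a multiple of `|λ|^s`.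
-/

open scoped Topology

/-- The truncated second moment `U(x) = ∫_{|z| < x} z² ν(dz)` of a Lévy measure `ν`, which measures
the activity of small jumps. It is a Bochner integral, hence `0` if `z²` is not integrable on
`(-x, x)`; this does not happen when `min (z²) 1` is `ν`-integrable. -/
noncomputable def truncatedSecondMoment (ν : Measure ℝ) (x : ℝ) : ℝ :=
  ∫ z in Ioo (-x) x, z ^ 2 ∂ν

theorem truncatedSecondMoment_restrict_Iio_zero (ν : Measure ℝ) {x : ℝ} (hx : 0 ≤ x) :
    truncatedSecondMoment (ν.restrict (Iio 0)) x =
      (∫⁻ z in Ioo (-x) 0, ENNReal.ofReal (z ^ 2) ∂ν).toReal := by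
  rw [truncatedSecondMoment, Measure.restrict_restrict measurableSet_Ioo, Ioo_inter_Iio,
    min_eq_right hx,
    integral_eq_lintegral_of_nonneg_ae (.of_forall fun z => sq_nonneg z) (by fun_prop)]

theorem integrable_min_sq_one_of_lintegral_min_sq_abs_ne_top {ν : Measure ℝ}
    (h : ∫⁻ z, ENNReal.ofReal (min (z ^ 2) |z|) ∂ν ≠ ⊤) :
    Integrable (fun z => min (z ^ 2) 1) ν := by
  have min_nonneg (z : ℝ) : 0 ≤ min (z ^ 2) |z| := le_min (sq_nonneg z) (abs_nonneg z)
  have integrable_min : Integrable (fun z => min (z ^ 2) |z|) ν :=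
    ⟨by fun_prop, (hasFiniteIntegral_iff_ofReal (.of_forall min_nonneg)).2 h.lt_top⟩
  refine integrable_min.mono' (by fun_prop) (.of_forall fun z => ?_)
  rw [Real.norm_of_nonneg (le_min (sq_nonneg z) zero_le_one)]
  refine le_min (min_le_left _ _) ?_
  rcases le_total |z| 1 with hz | hz
  · exact (min_le_left _ _).trans (by nlinarith [sq_abs z, abs_nonneg z])
  · exact (min_le_right _ _).trans hz

section LevyMeasure

variable {ν : Measure ℝ} (hν : Integrable (fun z => min (z ^ 2) 1) ν)

include hν

theorem integrableOn_sq_Ioo_neg_self (x : ℝ) :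
    IntegrableOn (fun z => z ^ 2) (Ioo (-x) x) ν := by
  refine (hν.integrableOn.const_mul (max (x ^ 2) 1)).mono' (by fun_prop) ?_
  filter_upwards [ae_restrict_mem measurableSet_Ioo] with z hz
  have hzx : z ^ 2 ≤ max (x ^ 2) 1 := (sq_le_sq' hz.1.le hz.2.le).trans (le_max_left _ _)
  rw [Real.norm_of_nonneg (sq_nonneg z), mul_min_of_nonneg _ _ (by positivity), mul_one]
  exact le_min (le_mul_of_one_le_left (sq_nonneg z) (le_max_right _ _)) hzx

theorem monotone_truncatedSecondMoment : Monotone (truncatedSecondMoment ν) := fun _ y hxy =>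
  setIntegral_mono_set (integrableOn_sq_Ioo_neg_self hν y) (.of_forall fun z => sq_nonneg z)
    (Ioo_subset_Ioo (neg_le_neg hxy) hxy).eventuallyLE

theorem integrable_cos_mul_sub_one (u : ℝ) : Integrable (fun z => Real.cos (u * z) - 1) ν := by
  refine (hν.const_mul (max (u ^ 2 / 2) 2)).mono' (by fun_prop) (.of_forall fun z => ?_)
  have sq_bound : 1 - Real.cos (u * z) ≤ u ^ 2 / 2 * z ^ 2 := by
    linarith [Real.one_sub_sq_div_two_le_cos (x := u * z)]
  rw [Real.norm_of_nonpos (by linarith [Real.cos_le_one (u * z)]), neg_sub,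
    mul_min_of_nonneg _ _ (by positivity), mul_one]
  refine le_min (sq_bound.trans ?_) (le_max_of_le_right ?_)
  · gcongr
    exact le_max_left _ _
  · linarith [Real.neg_one_le_cos (u * z)]

theorem integral_cos_mul_sub_one_le {u x : ℝ} (hux : |u| * x ≤ Real.pi) :
    ∫ z, (Real.cos (u * z) - 1) ∂ν ≤ -(2 / Real.pi ^ 2 * u ^ 2 * truncatedSecondMoment ν x) := by
  have cos_le {z : ℝ} (hz : z ∈ Ioo (-x) x) :
      Real.cos (u * z) - 1 ≤ -(2 / Real.pi ^ 2 * u ^ 2) * z ^ 2 := by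
    have huz : |u * z| ≤ Real.pi := by
      rw [abs_mul]
      exact (mul_le_mul_of_nonneg_left (abs_lt.2 hz).le (abs_nonneg u)).trans hux
    linarith [Real.cos_le_one_sub_mul_cos_sq huz]
  have integrable_cos := integrable_cos_mul_sub_one hν u
  calc ∫ z, (Real.cos (u * z) - 1) ∂ν
      ≤ ∫ z in Ioo (-x) x, (Real.cos (u * z) - 1) ∂ν := by
        rw [← integral_add_compl (measurableSet_Ioo (a := -x) (b := x)) integrable_cos]
        exact add_le_of_nonpos_right
          (integral_nonpos fun z => sub_nonpos.2 (Real.cos_le_one _))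
    _ ≤ ∫ z in Ioo (-x) x, -(2 / Real.pi ^ 2 * u ^ 2) * z ^ 2 ∂ν :=
        setIntegral_mono_on integrable_cos.integrableOn
          ((integrableOn_sq_Ioo_neg_self hν x).const_mul _) measurableSet_Ioo fun _ => cos_le
    _ = -(2 / Real.pi ^ 2 * u ^ 2 * truncatedSecondMoment ν x) := by
        rw [integral_const_mul, truncatedSecondMoment, neg_mul]

theorem mul_integral_cos_div_sqrt_sub_one_le (lam : ℝ) {t : ℝ} (ht : 1 ≤ t) :
    t * ∫ z, (Real.cos (lam * z / √t) - 1) ∂ν ≤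
      -(2 / Real.pi ^ 2 * (lam ^ 2 * truncatedSecondMoment ν |lam|⁻¹)) := by
  have ht₀ : 0 < t := by linarith
  have hux : |lam / √t| * |lam|⁻¹ ≤ Real.pi := by
    calc |lam / √t| * |lam|⁻¹ = |lam| * |lam|⁻¹ / √t := by
          rw [abs_div, abs_of_nonneg (Real.sqrt_nonneg t), div_mul_eq_mul_div]
      _ ≤ 1 / 1 := by
          gcongr
          · exact mul_inv_le_one
          · exact Real.one_le_sqrt.2 ht
      _ ≤ Real.pi := by linarith [Real.pi_gt_three]
  calc t * ∫ z, (Real.cos (lam * z / √t) - 1) ∂ν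
      = t * ∫ z, (Real.cos (lam / √t * z) - 1) ∂ν := by simp only [mul_div_right_comm]
    _ ≤ t * -(2 / Real.pi ^ 2 * (lam / √t) ^ 2 * truncatedSecondMoment ν |lam|⁻¹) := by
        gcongr
        exact integral_cos_mul_sub_one_le hν hux
    _ = -(2 / Real.pi ^ 2 * (lam ^ 2 * truncatedSecondMoment ν |lam|⁻¹)) := by
        rw [div_pow, Real.sq_sqrt ht₀.le]
        field_simp

end LevyMeasure

theorem exists_pos_eventually_le_of_liminf_pos {α : Type*} {l : Filter α} {u : α → ℝ}
    (h : 0 < liminf u l) : ∃ c > 0, ∀ᶠ a in l, c ≤ u a := by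
  by_contra hu
  rw [liminf_eq] at h
  -- `Real.sSup_nonpos` also covers an empty or unbounded set, whose `sSup` is `0` by convention.
  exact h.not_ge (Real.sSup_nonpos fun c hc => not_lt.1 fun hc₀ => hu ⟨c, hc₀, hc⟩)

theorem exists_pos_eventually_mul_rpow_le_of_liminf_pos {f : ℝ → ℝ} {p : ℝ}
    (h : 0 < liminf (fun x => x ^ (-p) * f x) (𝓝[>] 0)) :
    ∃ c > 0, ∀ᶠ x in 𝓝[>] 0, c * x ^ p ≤ f x := by
  obtain ⟨c, hc, hcf⟩ := exists_pos_eventually_le_of_liminf_pos h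
  refine ⟨c, hc, ?_⟩
  filter_upwards [hcf, self_mem_nhdsWithin] with x hx (hx₀ : 0 < x)
  rwa [Real.rpow_neg hx₀.le, inv_mul_eq_div, le_div_iff₀ (Real.rpow_pos_of_pos hx₀ p)] at hx

theorem exists_pos_eventually_mul_rpow_le_truncatedSecondMoment_restrict_Iio {ν : Measure ℝ}
    {s : ℝ} (h : 0 < liminf
      (fun x => x ^ (s - 2) * (∫⁻ z in Ioo (-x) 0, ENNReal.ofReal (z ^ 2) ∂ν).toReal) (𝓝[>] 0)) :
    ∃ c > 0, ∀ᶠ x in 𝓝[>] 0, c * x ^ (2 - s) ≤ truncatedSecondMoment (ν.restrict (Iio 0)) x := by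
  rw [← neg_sub 2 s] at h
  obtain ⟨c, hc, hcU⟩ := exists_pos_eventually_mul_rpow_le_of_liminf_pos h
  refine ⟨c, hc, ?_⟩
  filter_upwards [hcU, self_mem_nhdsWithin] with x hx (hx₀ : 0 < x)
  rwa [truncatedSecondMoment_restrict_Iio_zero ν hx₀.le]

theorem exists_pos_forall_mul_rpow_le_of_eventually {f : ℝ → ℝ} (hf : MonotoneOn f (Ioc 0 1))
    {c p : ℝ} (hc : 0 < c) (h : ∀ᶠ x in 𝓝[>] 0, c * x ^ p ≤ f x) :
    ∃ c' > 0, ∀ x ∈ Ioc 0 1, c' * x ^ p ≤ f x := by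
  obtain ⟨δ, hδ : 0 < δ, hδf⟩ := mem_nhdsGT_iff_exists_Ioc_subset.1 h
  set η := min δ 1
  have hη : 0 < η := lt_min hδ zero_lt_one
  refine ⟨c * η ^ p, by positivity, fun x hx => ?_⟩
  have hηx : 0 < η * x := mul_pos hη hx.1
  have hηx_le : η * x ≤ x := mul_le_of_le_one_left hx.1.le (min_le_right _ _)
  have hηx_le_δ : η * x ≤ δ := (mul_le_of_le_one_right hη.le hx.2).trans (min_le_left _ _)
  calc c * η ^ p * x ^ p = c * (η * x) ^ p := by rw [Real.mul_rpow hη.le hx.1.le, mul_assoc]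
    _ ≤ f (η * x) := hδf ⟨hηx, hηx_le_δ⟩
    _ ≤ f x := hf ⟨hηx, hηx_le.trans hx.2⟩ hx hηx_le

theorem mul_abs_rpow_le_sq_mul {f : ℝ → ℝ} {c s lam : ℝ}
    (hf : ∀ x ∈ Ioc 0 1, c * x ^ (2 - s) ≤ f x) (hlam : 1 ≤ |lam|) :
    c * |lam| ^ s ≤ lam ^ 2 * f |lam|⁻¹ := by
  have hlam₀ : 0 < |lam| := by linarith
  calc c * |lam| ^ s = lam ^ 2 * (c * |lam|⁻¹ ^ (2 - s)) := by
        rw [Real.inv_rpow hlam₀.le, Real.rpow_sub hlam₀, Real.rpow_two, sq_abs, inv_div]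
        field_simp [abs_pos.1 hlam₀]
    _ ≤ lam ^ 2 * f |lam|⁻¹ := by
        gcongr
        exact hf _ ⟨inv_pos.2 hlam₀, inv_le_one_of_one_le₀ hlam⟩

theorem abs_rpow_le_sq {s lam : ℝ} (hs : s ≤ 2) (hlam : 1 ≤ |lam|) : |lam| ^ s ≤ lam ^ 2 := by
  simpa only [Real.rpow_two, sq_abs] using Real.rpow_le_rpow_of_exponent_le hlam hs

theorem char_exponent_uniform_bound_gaussian_general {σ s : ℝ} (hs : s ≤ 2) {ν : Measure ℝ}
    (hν : Integrable (fun z => min (z ^ 2) 1) ν)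
    (hcase : σ ≠ 0 ∨ ∃ c > 0, ∀ᶠ x in 𝓝[>] 0, c * x ^ (2 - s) ≤ truncatedSecondMoment ν x) :
    ∃ κ > (0 : ℝ), ∀ lam t : ℝ, 1 ≤ |lam| → 1 ≤ t →
      -(σ ^ 2 * lam ^ 2) / 2 + t * ∫ z, (Real.cos (lam * z / √t) - 1) ∂ν ≤ -κ * |lam| ^ s := by
  rcases hcase with hσ | ⟨c, hc, hcU⟩
  · refine ⟨σ ^ 2 / 2, by positivity, fun lam t hlam ht => ?_⟩
    have jump_nonpos : t * ∫ z, (Real.cos (lam * z / √t) - 1) ∂ν ≤ 0 :=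
      mul_nonpos_of_nonneg_of_nonpos (by linarith)
        (integral_nonpos fun z => sub_nonpos.2 (Real.cos_le_one _))
    have gaussian_le := mul_le_mul_of_nonneg_left (abs_rpow_le_sq hs hlam) (sq_nonneg σ)
    linarith
  · obtain ⟨c', hc', hU⟩ := exists_pos_forall_mul_rpow_le_of_eventually
      ((monotone_truncatedSecondMoment hν).monotoneOn _) hc hcU
    refine ⟨2 / Real.pi ^ 2 * c', by positivity, fun lam t hlam ht => ?_⟩
    have gaussian_nonneg : 0 ≤ σ ^ 2 * lam ^ 2 := by positivity
    have jump_le := mul_integral_cos_div_sqrt_sub_one_le hν lam ht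
    have small_jumps_ge := mul_le_mul_of_nonneg_left (mul_abs_rpow_le_sq_mul hU hlam)
      (by positivity : 0 ≤ 2 / Real.pi ^ 2)
    linarith

/-- Lemma 4.5 of the paper (analytic content): uniform exponential bound on the
real part of the characteristic exponent of `X_t / √t` on `{|λ| > 1, t > 1}`. -/
theorem char_exponent_uniform_bound_gaussian (σ s : ℝ) (hσ : 0 ≤ σ)
    (hs1 : 0 < s) (hs2 : s < 2)
    (ν : Measure ℝ) [SigmaFinite ν]
    (hconc : ν (Ici (0 : ℝ)) = 0)
    (hmin : ∫⁻ z, ENNReal.ofReal (min (z ^ 2) |z|) ∂ν ≠ ⊤)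
    (hbig : ∫⁻ z in Iio (-1 : ℝ), ENNReal.ofReal (z ^ 2) ∂ν ≠ ⊤)
    (hcase : 0 < σ ∨ 0 < Filter.liminf
      (fun x => x ^ (s - 2) * (∫⁻ z in Ioo (-x) (0 : ℝ), ENNReal.ofReal (z ^ 2) ∂ν).toReal)
      (nhdsWithin 0 (Ioi 0))) :
    ∃ κ > (0 : ℝ), ∀ lam t : ℝ, 1 < |lam| → 1 < t →
      -(σ ^ 2 * lam ^ 2) / 2 +
          t * ∫ z in Iio (0 : ℝ), (Real.cos (lam * z / Real.sqrt t) - 1) ∂ν ≤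
        -κ * |lam| ^ s := by
  obtain ⟨κ, hκ, bound⟩ := char_exponent_uniform_bound_gaussian_general hs2.le
    (integrable_min_sq_one_of_lintegral_min_sq_abs_ne_top hmin).restrict
    (hcase.imp ne_of_gt exists_pos_eventually_mul_rpow_le_truncatedSecondMoment_restrict_Iio)
  exact ⟨κ, hκ, fun lam t hlam ht => bound lam t hlam.le ht.le⟩
end
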